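/- arXiv:math/0209011 — 3 statements merged into one kernel-verified Lean document; each statement's English description precedes it below -/
import Mathlib

section
/- Given integers b_1 ≤ … ≤ b_t and a_0 ≤ … ≤ a_{t+c−2} with a_{i−1} − b_i > 0 for all i = 1,…,t, there exists a t × (t+c−1) homogeneous matrix with entries in k[x_0,…,x_{n+c}] of degrees a_j − b_i whose maximal minors generate an ideal of codimension exactly c (i.e., the associated standard determinantal scheme of codimension c exists). In particular the locus W_s(b;a) of standard determinantal schemes with this degree matrix is nonempty if and only if a_{i−1} − b_i > 0 for i = 1,…,t. -/
section aux
open Classical in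
/-- all maximal minors lie in `Q` -/
def MinorsIn {A ι κ : Type} [CommRing A] [Fintype ι] (M : Matrix ι κ A) (Q : Ideal A) : Prop :=
  ∀ g : ι → κ, (M.submatrix id g).det ∈ Q

theorem field_dep {K ι κ : Type} [Field K] [Fintype ι] [DecidableEq ι] [Fintype κ]
    (N : Matrix ι κ K) (h : ∀ g : ι → κ, (N.submatrix id g).det = 0) :
    ∃ y : ι → K, y ≠ 0 ∧ ∀ j, ∑ i, y i * N i j = 0 := by
  classical
  by_contra hcon
  push Not at hcon
  have hinj : LinearMap.ker (Matrix.toLin' N.transpose) = ⊥ := by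
    rw [LinearMap.ker_eq_bot']
    intro y hy
    by_contra hne
    obtain ⟨j, hj⟩ := hcon y hne
    apply hj
    have := congrFun hy j
    simp only [Matrix.toLin'_apply, Matrix.mulVec, dotProduct, Matrix.transpose_apply, Pi.zero_apply] at this
    rw [← this]
    exact Finset.sum_congr rfl fun i _ => mul_comm _ _
  obtain ⟨L, hL⟩ := LinearMap.exists_leftInverse_of_injective _ hinj
  have h1 : LinearMap.toMatrix' L * N.transpose = 1 := by
    have := congrArg LinearMap.toMatrix' hL
    rw [LinearMap.toMatrix'_comp, LinearMap.toMatrix'_toLin', LinearMap.toMatrix'_id] at this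
    exact this
  have h2 : (LinearMap.toMatrix' L * N.transpose).det = 0 := by
    have e : (LinearMap.toMatrix' L * N.transpose) =
      (fun i => ∑ j, LinearMap.toMatrix' L i j • N.transpose j) := by
      ext i i'
      simp [Matrix.mul_apply, Finset.sum_apply]
    rw [e]
    change Matrix.detRowAlternating (fun i => ∑ j, LinearMap.toMatrix' L i j • N.transpose j) = 0
    rw [← AlternatingMap.coe_multilinearMap, MultilinearMap.map_sum]
    refine Finset.sum_eq_zero fun g _ => ?_
    rw [MultilinearMap.map_smul_univ]
    have : Matrix.detRowAlternating (fun i => N.transpose (g i)) = 0 := by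
      have := h g
      rw [← Matrix.det_transpose] at this
      exact this
    rw [AlternatingMap.coe_multilinearMap, this, smul_zero]
  rw [h1, Matrix.det_one] at h2
  exact one_ne_zero h2

theorem minorsIn_iff {A ι κ : Type} [CommRing A] [Fintype ι] [Fintype κ] (M : Matrix ι κ A)
    (Q : Ideal A) [hQ : Q.IsPrime] : MinorsIn M Q ↔
      ∃ y : ι → A, (∃ i, y i ∉ Q) ∧ ∀ j, ∑ i, y i * M i j ∈ Q := by
  classical
  constructor
  · intro h
    let K := FractionRing (A ⧸ Q)
    let f : A →+* K := (algebraMap (A ⧸ Q) K).comp (Ideal.Quotient.mk Q)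
    have hf : ∀ a, f a = 0 ↔ a ∈ Q := by
      intro a
      simp only [f, RingHom.comp_apply]
      rw [IsFractionRing.to_map_eq_zero_iff, Ideal.Quotient.eq_zero_iff_mem]
    obtain ⟨y, hy, hy2⟩ := field_dep (M.map f) (by
      intro g
      have := h g
      rw [← hf] at this
      rw [← this]
      have e := RingHom.map_det f (M.submatrix id g)
      refine Eq.trans ?_ (e.symm.trans ?_)
      · rfl
      · congr!)
    obtain ⟨b, hb⟩ := IsLocalization.exist_integer_multiples_of_finite
      (nonZeroDivisors (A ⧸ Q)) y
    have hb' : ∀ i, ∃ z : A, f z = algebraMap (A ⧸ Q) K b * y i := by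
      intro i
      obtain ⟨w, hw⟩ := hb i
      obtain ⟨z, rfl⟩ := Ideal.Quotient.mk_surjective w
      refine ⟨z, ?_⟩
      simp only [f, RingHom.comp_apply]
      rw [hw, Algebra.smul_def]
    choose z hz using hb'
    have hb0 : algebraMap (A ⧸ Q) K b ≠ 0 :=
      IsFractionRing.to_map_ne_zero_of_mem_nonZeroDivisors b.2
    refine ⟨z, ?_, ?_⟩
    · obtain ⟨i, hi⟩ := Function.ne_iff.mp hy
      refine ⟨i, ?_⟩
      rw [← hf, hz]
      exact mul_ne_zero hb0 hi
    · intro j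
      rw [← hf, map_sum]
      have := hy2 j
      simp only [map_mul, hz, mul_assoc]
      rw [← Finset.mul_sum]
      simp only [Matrix.map_apply] at this
      rw [this, mul_zero]
  · rintro ⟨y, ⟨i, hi⟩, hy⟩ g
    let N := M.submatrix id g
    have h1 : Matrix.vecMul (Matrix.vecMul y N) N.adjugate i = y i * N.det := by
      rw [Matrix.vecMul_vecMul, Matrix.mul_adjugate, Matrix.vecMul_smul, Matrix.vecMul_one]
      simp [mul_comm]
    have h2 : y i * N.det ∈ Q := by
      rw [← h1]
      refine Q.sum_mem fun j _ => Q.mul_mem_right _ ?_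
      exact hy (g j)
    have h3 := (hQ.mem_or_mem h2).resolve_left hi
    convert h3

theorem MinorsIn.mono {A ι κ : Type} [CommRing A] [Fintype ι] {M : Matrix ι κ A}
    {Q Q' : Ideal A} (h : MinorsIn M Q) (hQ : Q ≤ Q') : MinorsIn M Q' := fun g => hQ (h g)

/-- Pivot reduction. -/
def pivot {A ι κ : Type} [CommRing A] (M : Matrix ι κ A) (i₀ : ι) (j₀ : κ) :
    Matrix {i // i ≠ i₀} {j // j ≠ j₀} A :=
  fun i j => M i₀ j₀ * M i j - M i j₀ * M i₀ j

theorem sum_split {A ι : Type} [AddCommMonoid A] [Fintype ι] [DecidableEq ι] (i₀ : ι) (f : ι → A) :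
    ∑ i, f i = f i₀ + ∑ i : {i // i ≠ i₀}, f i := by
  rw [Fintype.sum_eq_add_sum_compl i₀]
  congr 1
  rw [← Finset.sum_subtype]
  intro x; simp

theorem pivot_iff {A ι κ : Type} [CommRing A] [Fintype ι] [Fintype κ] [DecidableEq ι]
    [DecidableEq κ] (M : Matrix ι κ A)
    (i₀ : ι) (j₀ : κ) (Q : Ideal A) [hQ : Q.IsPrime] (hu : M i₀ j₀ ∉ Q) :
    MinorsIn (pivot M i₀ j₀) Q ↔ MinorsIn M Q := by
  rw [minorsIn_iff, minorsIn_iff]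
  constructor
  · rintro ⟨y, ⟨i, hi⟩, hy⟩
    refine ⟨fun i => if h : i = i₀ then - ∑ i : {i // i ≠ i₀}, y i * M i j₀ else
      M i₀ j₀ * y ⟨i, h⟩, ⟨i, ?_⟩, ?_⟩
    · simp only [dif_neg i.2]
      exact fun h => (hQ.mem_or_mem h).elim hu hi
    · intro j
      rw [sum_split i₀]
      have e : ∀ i : {i // i ≠ i₀}, (if h : (i : ι) = i₀ then - ∑ i : {i // i ≠ i₀}, y i * M i j₀ else
        M i₀ j₀ * y ⟨i, h⟩) = M i₀ j₀ * y i := fun i => dif_neg i.2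
      simp only [e, dif_pos]
      by_cases hj : j = j₀
      · subst hj
        convert Q.zero_mem
        rw [neg_mul, Finset.sum_mul, neg_add_eq_zero]
        exact Finset.sum_congr rfl fun i _ => by ring
      · convert hy ⟨j, hj⟩ using 1
        rw [neg_mul, Finset.sum_mul, neg_add_eq_sub, ← Finset.sum_sub_distrib]
        exact Finset.sum_congr rfl fun i _ => by simp only [pivot]; ring
  · rintro ⟨y, ⟨i, hi⟩, hy⟩
    refine ⟨fun i => y i, ?_, ?_⟩
    · by_contra hall
      push Not at hall
      have hne : y i₀ ∉ Q := by
        by_cases h : i = i₀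
        · exact h ▸ hi
        · exact absurd (hall ⟨i, h⟩) hi
      have := hy j₀
      rw [sum_split i₀] at this
      rw [Ideal.add_mem_iff_left _ (Q.sum_mem fun i _ => Q.mul_mem_right _ (hall i))] at this
      exact (hQ.mem_or_mem this).elim hne hu
    · intro j
      have h1 := hy j
      have h2 := hy j₀
      rw [sum_split i₀] at h1 h2
      have := Q.sub_mem (Q.mul_mem_left (M i₀ j₀) h1) (Q.mul_mem_left (M i₀ j) h2)
      convert this using 1
      rw [mul_add, mul_add, Finset.mul_sum, Finset.mul_sum, add_sub_add_comm,
        ← Finset.sum_sub_distrib]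
      rw [show M i₀ j₀ * (y i₀ * M i₀ j) - M i₀ j * (y i₀ * M i₀ j₀) = 0 by ring, zero_add]
      exact Finset.sum_congr rfl fun i _ => by simp only [pivot]; ring

/-- `P` is minimal among primes containing the maximal minors of `M` and `F`. -/
def MinOver {A ι κ : Type} [CommRing A] [Fintype ι] (M : Matrix ι κ A) (F : Finset A)
    (P : Ideal A) : Prop :=
  MinorsIn M P ∧ (↑F : Set A) ⊆ P ∧
    ∀ Q : Ideal A, Q.IsPrime → Q ≤ P → MinorsIn M Q → (↑F : Set A) ⊆ Q → P ≤ Q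

theorem MinOver.pivot {A ι κ : Type} [CommRing A] [Fintype ι] [Fintype κ] [DecidableEq ι]
    [DecidableEq κ] {M : Matrix ι κ A} {F : Finset A} {P : Ideal A} [P.IsPrime]
    (h : MinOver M F P) (i₀ : ι) (j₀ : κ) (hu : M i₀ j₀ ∉ P) :
    MinOver (pivot M i₀ j₀) F P := by
  refine ⟨(pivot_iff M i₀ j₀ P hu).2 h.1, h.2.1, fun Q hQ hQP hm hF => ?_⟩
  exact h.2.2 Q hQ hQP ((pivot_iff M i₀ j₀ Q fun h => hu (hQP h)).1 hm) hF

open Polynomial Classical in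
/-- The matrix `M` with the variable added at one entry. -/
noncomputable def polyMat {A ι κ : Type} [CommRing A] (M : Matrix ι κ A) (i₀ : ι) (j₀ : κ) :
    Matrix ι κ A[X] :=
  fun i j => C (M i j) + if i = i₀ ∧ j = j₀ then (X : A[X]) else 0

open Polynomial Classical in
theorem minOver_poly {A ι κ : Type} [CommRing A] [IsNoetherianRing A] [Fintype ι] [Fintype κ]
    {M : Matrix ι κ A} {F : Finset A} {P : Ideal A} [hP : P.IsPrime]
    (h : MinOver M F P) (i₀ i₁ : ι) (hi : i₁ ≠ i₀) (j₀ : κ) (hall : ∀ i j, M i j ∈ P) :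
    MinOver (polyMat M i₀ j₀) (F.image C) (P.map C) := by
  have hPB : (P.map (C : A →+* A[X])).IsPrime := inferInstance
  refine ⟨?_, ?_, ?_⟩
  · rw [minorsIn_iff]
    refine ⟨Pi.single i₁ 1, ⟨i₁, ?_⟩, fun j => ?_⟩
    · rw [Pi.single_eq_same]
      exact (Ideal.ne_top_iff_one _).1 hPB.ne_top
    · rw [Finset.sum_eq_single i₁]
      · simpa [polyMat, hi] using Ideal.mem_map_of_mem C (hall i₁ j)
      · intro b _ hb
        simp [hb]
      · simp
  · intro x hx
    simp only [Finset.coe_image, Set.mem_image] at hx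
    obtain ⟨a, ha, rfl⟩ := hx
    exact Ideal.mem_map_of_mem C (h.2.1 ha)
  · intro Q' hQ' hle hm hF
    by_contra hnot
    let Q0 : Ideal A[X] := P.comap (evalRingHom 0)
    have hQ0 : Q0.IsPrime := inferInstance
    have hPQ0 : P.map C ≤ Q0 := by
      rw [Ideal.map_le_iff_le_comap]
      intro a ha
      simpa [Q0] using ha
    have hXQ0 : (X : A[X]) ∈ Q0 := by simp [Q0]
    have hXP : (X : A[X]) ∉ P.map C := by
      intro hX
      rw [Ideal.mem_map_C_iff] at hX
      have := hX 1
      rw [coeff_X_one] at this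
      exact (Ideal.ne_top_iff_one _).1 hP.ne_top this
    have hmin : Q0 ∈ (Q' ⊔ Ideal.span {(X : A[X])}).minimalPrimes := by
      refine ⟨⟨hQ0, sup_le (hle.trans hPQ0) (by simpa [Ideal.span_le] using hXQ0)⟩, ?_⟩
      rintro Q ⟨hQ, hQle⟩ hQQ0
      have hXQ : (X : A[X]) ∈ Q := hQle (Ideal.mem_sup_right (Ideal.mem_span_singleton_self _))
      have hQ'Q : Q' ≤ Q := le_sup_left.trans hQle
      have hPQ : P ≤ Q.comap C := by
        apply h.2.2 _ inferInstance
        · intro a ha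
          have := hQQ0 (Ideal.mem_comap.1 ha)
          simpa [Q0] using this
        · intro g
          rw [Ideal.mem_comap, ← Ideal.Quotient.eq_zero_iff_mem, RingHom.map_det, RingHom.map_det]
          have := hm.mono hQ'Q g
          rw [← Ideal.Quotient.eq_zero_iff_mem, RingHom.map_det] at this
          convert this using 2
          ext i j
          have hX0 : Ideal.Quotient.mk Q (X : A[X]) = 0 := Ideal.Quotient.eq_zero_iff_mem.2 hXQ
          simp only [RingHom.mapMatrix_apply, Matrix.map_apply, Matrix.submatrix_apply, polyMat, map_add, id]
          split_ifs <;> simp [hX0]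
        · intro a ha
          exact hQ'Q (hF (Finset.mem_coe.2 (Finset.mem_image_of_mem _ ha)))
      intro f hf
      have hf0 : f.eval 0 ∈ P := by simpa [Q0] using hf
      have e := Polynomial.divX_mul_X_add f
      rw [← e]
      refine Q.add_mem (Q.mul_mem_left _ hXQ) (hPQ ?_)
      rwa [Polynomial.coeff_zero_eq_eval_zero]
    have hht := Ideal.map_height_le_one_of_mem_minimalPrimes hmin
    let q := Ideal.Quotient.mk Q'
    have hqs : Function.Surjective q := Ideal.Quotient.mk_surjective
    have hk : RingHom.ker q = Q' := Ideal.mk_ker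
    have i1 : (Q0.map q).IsPrime := Ideal.map_isPrime_of_surjective hqs (by rw [hk]; exact hle.trans hPQ0)
    have i2 : ((P.map C).map q).IsPrime := Ideal.map_isPrime_of_surjective hqs (by rw [hk]; exact hle)
    have cm : ∀ I : Ideal A[X], Q' ≤ I → (I.map q).comap q = I := by
      intro I hI
      rw [Ideal.comap_map_of_surjective' q hqs, hk, sup_eq_left.2 hI]
    have l1 : (⊥ : Ideal (A[X] ⧸ Q')) < (P.map C).map q := by
      rw [bot_lt_iff_ne_bot]
      intro hb
      rw [Ideal.map_eq_bot_iff_le_ker, hk] at hb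
      exact hnot hb
    have l2 : (P.map C).map q < Q0.map q := by
      refine lt_of_le_of_ne (Ideal.map_mono hPQ0) fun he => hXP ?_
      rw [← cm _ hle, he, cm _ (hle.trans hPQ0)]
      exact hXQ0
    have i3 : (⊥ : Ideal (A[X] ⧸ Q')).IsPrime := Ideal.isPrime_bot
    have a1 := Ideal.height_add_one_le_of_lt_of_isPrime l1
    have a2 := Ideal.height_add_one_le_of_lt_of_isPrime l2
    have b1 : (1 : ℕ∞) ≤ ((P.map C).map q).height := le_trans le_add_self a1
    have b2 : (1 : ℕ∞) + 1 ≤ 1 := ((add_le_add_left b1 1).trans a2).trans hht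
    exact absurd b2 (by decide)

open Polynomial in
theorem height_le_map_C {A : Type} [CommRing A] [IsNoetherianRing A] (P : Ideal A)
    [hP : P.IsPrime] : P.height ≤ (P.map (C : A →+* A[X])).height := by
  have hPB : (P.map (C : A →+* A[X])).IsPrime := inferInstance
  have : (P.map (C : A →+* A[X])).LiesOver P := by
    constructor
    ext a
    rw [Ideal.under_def, Ideal.mem_comap]
    change _ ↔ C a ∈ _
    rw [Ideal.mem_map_C_iff]
    constructor
    · intro h n
      rw [coeff_C]; split_ifs <;> simp [h]
    · intro h; simpa using h 0
  rw [Ideal.height_eq_height_add_of_liesOver_of_hasGoingDown P (P.map C)]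
  exact le_self_add

theorem key (p : ℕ) : ∀ (A ι κ : Type) [CommRing A] [IsNoetherianRing A] [Fintype ι] [Fintype κ]
    (M : Matrix ι κ A) (F : Finset A) (P : Ideal A) [P.IsPrime], Fintype.card ι = p →
    p ≤ Fintype.card κ → MinOver M F P → P.height + p ≤ Fintype.card κ + 1 + F.card := by
  induction p with
  | zero =>
    intro A ι κ _ _ _ _ M F P hP hι _ h
    exfalso
    obtain ⟨y, ⟨i, _⟩, _⟩ := (minorsIn_iff M P).1 h.1
    exact (Fintype.card_eq_zero_iff.1 hι).elim i
  | succ p ih =>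
    have step : ∀ (A ι κ : Type) [CommRing A] [IsNoetherianRing A] [Fintype ι] [Fintype κ]
      (M : Matrix ι κ A) (F : Finset A) (P : Ideal A) [P.IsPrime], Fintype.card ι = p + 1 →
      p + 1 ≤ Fintype.card κ → MinOver M F P → (∃ i j, M i j ∉ P) →
      P.height + (p + 1 : ℕ) ≤ Fintype.card κ + 1 + F.card := by
      intro A ι κ _ _ _ _ M F P hP hι hκ h ⟨i₀, j₀, hu⟩
      classical
      have c1 : Fintype.card {i // i ≠ i₀} = p := by
        simp [Fintype.card_subtype_compl, hι]
      have c2 : Fintype.card {j // j ≠ j₀} + 1 = Fintype.card κ := by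
        simp [Fintype.card_subtype_compl]; omega
      have := ih A _ _ (pivot M i₀ j₀) F P c1 (by omega) (h.pivot i₀ j₀ hu)
      rw [← c2]
      push_cast
      calc P.height + ((p : ℕ∞) + 1) = P.height + p + 1 := by ring
        _ ≤ _ := add_le_add_left this 1
        _ = _ := by ring
    intro A ι κ _ _ _ _ M F P hP hι hκ h
    classical
    by_cases hall : ∃ i j, M i j ∉ P
    · exact step A ι κ M F P hι hκ h hall
    push Not at hall
    rcases Nat.eq_zero_or_pos p with rfl | hp
    · -- Krull
      have hmin : P ∈ (Ideal.span (↑(F ∪ Finset.univ.image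
          (fun ij : ι × κ => M ij.1 ij.2)) : Set A)).minimalPrimes := by
        refine ⟨⟨hP, ?_⟩, ?_⟩
        · rw [Ideal.span_le]
          intro x hx
          simp only [Finset.coe_union, Finset.coe_image, Set.mem_union, Set.mem_image] at hx
          rcases hx with hx | ⟨ij, _, rfl⟩
          · exact h.2.1 hx
          · exact hall _ _
        · rintro Q ⟨hQ, hle⟩ hQP
          rw [Ideal.span_le] at hle
          refine h.2.2 Q hQ hQP ?_ fun x hx => hle (by simp [Finset.mem_coe.1 hx])
          rw [minorsIn_iff]
          have hc : Nonempty ι := Fintype.card_pos_iff.1 (by omega)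
          refine ⟨fun _ => 1, ⟨hc.some, (Ideal.ne_top_iff_one _).1 hQ.ne_top⟩, fun j => ?_⟩
          refine Q.sum_mem fun i _ => Q.mul_mem_left _ (hle ?_)
          simp only [Finset.coe_union, Finset.coe_image, Set.mem_union, Set.mem_image]
          exact Or.inr ⟨(i, j), by simp, rfl⟩
      have h1 := Ideal.height_le_card_of_mem_minimalPrimes_span_finset hmin
      have h2 : (F ∪ Finset.univ.image (fun ij : ι × κ => M ij.1 ij.2)).card ≤
          F.card + Fintype.card κ := by
        refine (Finset.card_union_le _ _).trans (Nat.add_le_add_left ?_ _)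
        refine Finset.card_image_le.trans ?_
        simp [hι]
      calc P.height + ((0 + 1 : ℕ) : ℕ∞) ≤ ((F.card + Fintype.card κ : ℕ) : ℕ∞) + (0 + 1 : ℕ) := by
            gcongr
            exact h1.trans (by exact_mod_cast h2)
        _ = _ := by push_cast; ring
    · have : Nontrivial ι := Fintype.one_lt_card_iff_nontrivial.1 (by omega)
      obtain ⟨i₀, i₁, hne⟩ := exists_pair_ne ι
      have hκ0 : Nonempty κ := Fintype.card_pos_iff.1 (by omega)
      obtain ⟨j₀⟩ := hκ0
      have hm := minOver_poly h i₀ i₁ hne.symm j₀ hall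
      have hPB : (P.map (Polynomial.C : A →+* Polynomial A)).IsPrime :=
        inferInstance
      have := step (Polynomial A) ι κ _ _ _ hι hκ hm ⟨i₀, j₀, by
        simp only [polyMat, and_self, if_true]
        rw [Ideal.add_mem_iff_right _ (Ideal.mem_map_of_mem _ (hall _ _)), Ideal.mem_map_C_iff]
        intro hX
        have := hX 1
        rw [Polynomial.coeff_X_one] at this
        exact (Ideal.ne_top_iff_one _).1 hP.ne_top this⟩
      calc P.height + ((p + 1 : ℕ) : ℕ∞) ≤ (P.map Polynomial.C).height + (p + 1 : ℕ) := by
            gcongr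
            exact height_le_map_C P
        _ ≤ _ := this
        _ ≤ _ := by gcongr; exact Finset.card_image_le
end aux

open MvPolynomial

/-- set the first `i` variables to zero -/
noncomputable def killVars (k : Type) [Field k] (N i : ℕ) :
    MvPolynomial (Fin N) k →ₐ[k] MvPolynomial (Fin N) k :=
  aeval fun j => if j.val < i then 0 else X j

theorem height_killVars (k : Type) [Field k] (N i : ℕ) (hi : i ≤ N) :
    (i : ℕ∞) ≤ (RingHom.ker (killVars k N i)).height := by
  induction i with
  | zero => simp
  | succ i ih =>
    have p1 : (RingHom.ker (killVars k N i)).IsPrime := RingHom.ker_isPrime _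
    have p2 : (RingHom.ker (killVars k N (i + 1))).IsPrime := RingHom.ker_isPrime _
    have hcomp : (killVars k N (i + 1)).comp (killVars k N i) = killVars k N (i + 1) := by
      ext1 j
      simp only [killVars, AlgHom.comp_apply, aeval_X]
      split_ifs with h1 h2
      · simp
      · omega
      · simp only [aeval_X, if_pos, *]
      · simp only [aeval_X, *]; simp
    have hlt : RingHom.ker (killVars k N i) < RingHom.ker (killVars k N (i + 1)) := by
      refine lt_of_le_of_ne ?_ ?_
      · intro p hp
        rw [RingHom.mem_ker] at hp ⊢
        rw [← hcomp, AlgHom.comp_apply, hp, map_zero]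
      · intro he
        have h1 : (X ⟨i, by omega⟩ : MvPolynomial (Fin N) k) ∈
            RingHom.ker (killVars k N (i + 1)) := by
          simp [RingHom.mem_ker, killVars]
        rw [← he, RingHom.mem_ker] at h1
        simp [killVars] at h1
    have := Ideal.height_add_one_le_of_lt_of_isPrime hlt
    push_cast
    exact (add_le_add_left (ih (by omega)) 1).trans this

theorem height_irrelevant (k : Type) [Field k] (N : ℕ) :
    (N : ℕ∞) ≤ (RingHom.ker (constantCoeff : MvPolynomial (Fin N) k →+* k)).height := by
  refine (height_killVars k N N le_rfl).trans (Ideal.height_mono ?_)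
  intro p hp
  rw [RingHom.mem_ker] at hp ⊢
  have hc : (constantCoeff : MvPolynomial (Fin N) k →+* k).comp
      (killVars k N N : MvPolynomial (Fin N) k →+* MvPolynomial (Fin N) k) = constantCoeff := by
    ext j <;> simp [killVars]
  rw [← hc, RingHom.comp_apply]
  change constantCoeff (killVars k N N p) = 0
  rw [hp, map_zero]

theorem forward_dir (k : Type) [Field k]
    (n c t : ℕ) (hc : 2 ≤ c)
    (A : Matrix (Fin t) (Fin (t + c - 1)) (MvPolynomial (Fin (n + c + 1)) k))
    (i : Fin t) (hent : ∀ r j, constantCoeff (A r j) = 0)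
    (hblock : ∀ (r : Fin t) (j : Fin (t + c - 1)), i ≤ r → j.val ≤ i.val → A r j = 0)
    (hdim : ringKrullDim ((MvPolynomial (Fin (n + c + 1)) k) ⧸
        Ideal.span {d : MvPolynomial (Fin (n + c + 1)) k |
          ∃ g : Fin t → Fin (t + c - 1), Function.Injective g ∧
            d = (A.submatrix id g).det}) = (n + 1 : ℕ)) : False := by
  classical
  set I := Ideal.span {d : MvPolynomial (Fin (n + c + 1)) k |
          ∃ g : Fin t → Fin (t + c - 1), Function.Injective g ∧
            d = (A.submatrix id g).det} with hI
  let R := MvPolynomial (Fin (n + c + 1)) k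
  let m : Ideal R := RingHom.ker (constantCoeff : R →+* k)
  have hm : m.IsPrime := RingHom.ker_isPrime _
  let M : Matrix {r : Fin t // i ≤ r} {j : Fin (t + c - 1) // i.val < j.val} R :=
    A.submatrix Subtype.val Subtype.val
  have hMA : ∀ Q : Ideal R, Q.IsPrime → MinorsIn M Q → I ≤ Q := by
    intro Q hQ hMQ
    have hA : MinorsIn A Q := by
      rw [minorsIn_iff] at hMQ ⊢
      obtain ⟨y, ⟨r, hr⟩, hy⟩ := hMQ
      refine ⟨fun r => if h : i ≤ r then y ⟨r, h⟩ else 0, ⟨r, ?_⟩, fun j => ?_⟩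
      · simpa [dif_pos r.2] using hr
      · by_cases hj : i.val < j.val
        · convert hy ⟨j, hj⟩ using 1
          have e1 := Finset.sum_filter_of_ne (s := Finset.univ) (p := fun r => i ≤ r)
            (f := fun r => (if h : i ≤ r then y ⟨r, h⟩ else 0) * A r j) (by
              intro r _ hr
              by_contra h
              exact hr (by simp only [dif_neg h, zero_mul]))
          rw [← e1, Finset.sum_subtype _ (p := fun r => i ≤ r) (by simp)]
          refine Finset.sum_congr rfl fun r _ => ?_
          simp only [dif_pos r.2]
          rfl
        · convert Q.zero_mem
          refine Finset.sum_eq_zero fun r _ => ?_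
          by_cases h : i ≤ r
          · rw [hblock r j h (by omega), mul_zero]
          · simp only [dif_neg h, zero_mul]
    rw [hI, Ideal.span_le]
    rintro d ⟨g, _, rfl⟩
    rw [SetLike.mem_coe]
    convert hA g
  have hMm : MinorsIn M m := by
    rw [minorsIn_iff]
    refine ⟨fun _ => 1, ⟨⟨i, le_rfl⟩, (Ideal.ne_top_iff_one _).1 hm.ne_top⟩, fun j => ?_⟩
    exact m.sum_mem fun r _ => m.mul_mem_left _ (hent _ _)
  have hIm : I ≤ m := hMA m hm hMm
  let q := Ideal.Quotient.mk I
  have hqs : Function.Surjective q := Ideal.Quotient.mk_surjective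
  have hk : RingHom.ker q = I := Ideal.mk_ker
  have cm : ∀ J : Ideal R, I ≤ J → (J.map q).comap q = J := by
    intro J hJ
    rw [Ideal.comap_map_of_surjective' q hqs, hk, sup_eq_left.2 hJ]
  have i1 : (m.map q).IsPrime := Ideal.map_isPrime_of_surjective hqs (by rw [hk]; exact hIm)
  obtain ⟨s, hs, hcard⟩ := (m.map q).exists_finset_card_eq_height_of_isNoetherianRing
  have hsn : s.card ≤ n + 1 := by
    have h1 := (m.map q).height_le_ringKrullDim_of_isPrime
    rw [hdim, ← hcard] at h1
    exact_mod_cast h1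
  choose lift hlift using hqs
  let F : Finset R := s.image lift
  have hmin : MinOver M F m := by
    refine ⟨hMm, ?_, fun Q hQ hQm hMQ hFQ => ?_⟩
    · intro x hx
      simp only [F, Finset.coe_image, Set.mem_image] at hx
      obtain ⟨z, hz, rfl⟩ := hx
      rw [← cm m hIm]
      rw [SetLike.mem_coe, Ideal.mem_comap, hlift]
      exact hs.1.2 (Ideal.subset_span hz)
    · have hIQ := hMA Q hQ hMQ
      have i2 : (Q.map q).IsPrime := Ideal.map_isPrime_of_surjective
        Ideal.Quotient.mk_surjective (by rw [hk]; exact hIQ)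
      have hle := hs.2 ⟨i2, by
        rw [Ideal.span_le]
        intro z hz
        rw [← hlift z]
        exact Ideal.mem_map_of_mem q (hFQ (Finset.mem_coe.2 (Finset.mem_image_of_mem _ hz)))⟩
        (Ideal.map_mono hQm)
      rw [← cm m hIm, ← cm Q hIQ]
      exact Ideal.comap_mono hle
  have c1 : Fintype.card {r : Fin t // i ≤ r} = t - i := by
    rw [Fintype.card_subtype, Finset.filter_le_eq_Ici, Fin.card_Ici]
  have c2 : Fintype.card {j : Fin (t + c - 1) // i.val < j.val} = t + c - 1 - 1 - i := by
    have : (Finset.univ.filter fun j : Fin (t + c - 1) => i.val < j.val) =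
        Finset.Ioi ⟨i.val, by omega⟩ := by
      ext j; simp [Fin.lt_def]
    rw [Fintype.card_subtype, this, Fin.card_Ioi]
  have hkey := key _ R _ _ M F m rfl (by omega) hmin
  have hF : F.card ≤ n + 1 := Finset.card_image_le.trans hsn
  have h1 := height_irrelevant k (n + c + 1)
  rw [c1, c2] at hkey
  have h2 : ((n + c + 1 : ℕ) : ℕ∞) + ((t - i : ℕ) : ℕ∞) ≤
    ((t + c - 1 - 1 - i : ℕ) : ℕ∞) + 1 + (F.card : ℕ∞) := (add_le_add_left h1 _).trans hkey
  have h3 : n + c + 1 + (t - i) ≤ (t + c - 1 - 1 - i) + 1 + F.card := by exact_mod_cast h2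
  omega

/-- set the first `c` variables to zero -/
noncomputable def projVars (k : Type) [Field k] (n c : ℕ) :
    MvPolynomial (Fin (n + c + 1)) k →ₐ[k] MvPolynomial (Fin (n + 1)) k :=
  aeval fun j => if h : j.val < c then 0 else X ⟨j.val - c, by omega⟩

/-- section of `projVars` -/
noncomputable def secVars (k : Type) [Field k] (n c : ℕ) :
    MvPolynomial (Fin (n + 1)) k →ₐ[k] MvPolynomial (Fin (n + c + 1)) k :=
  aeval fun j => X ⟨j.val + c, by omega⟩

theorem projVars_surjective (k : Type) [Field k] (n c : ℕ) :
    Function.Surjective (projVars k n c) := by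
  have : (projVars k n c).comp (secVars k n c) = AlgHom.id k _ := by
    ext1 j
    simp [projVars, secVars]
  intro p
  exact ⟨secVars k n c p, DFunLike.congr_fun this p⟩

theorem ker_projVars_le (k : Type) [Field k] (n c : ℕ) (Q : Ideal (MvPolynomial (Fin (n + c + 1)) k))
    (h : ∀ j : Fin (n + c + 1), j.val < c → X j ∈ Q) : RingHom.ker (projVars k n c) ≤ Q := by
  have : ((Ideal.Quotient.mkₐ k Q).comp (secVars k n c)).comp (projVars k n c) =
      Ideal.Quotient.mkₐ k Q := by
    ext1 j
    simp only [AlgHom.comp_apply, projVars, aeval_X]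
    split_ifs with hj
    · rw [map_zero, map_zero]
      exact (Ideal.Quotient.eq_zero_iff_mem.2 (h j hj)).symm
    · simp only [secVars, aeval_X]
      congr 3
      omega
  intro p hp
  rw [RingHom.mem_ker] at hp
  rw [← Ideal.Quotient.eq_zero_iff_mem]
  change Ideal.Quotient.mkₐ k Q p = 0
  rw [← this, AlgHom.comp_apply, hp, map_zero]

theorem dim_of_zeroLocus (k : Type) [Field k] (n c : ℕ) (I : Ideal (MvPolynomial (Fin (n + c + 1)) k))
    (h1 : I ≤ RingHom.ker (projVars k n c))
    (h2 : ∀ Q : Ideal (MvPolynomial (Fin (n + c + 1)) k), Q.IsPrime → I ≤ Q →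
      RingHom.ker (projVars k n c) ≤ Q) :
    ringKrullDim (MvPolynomial (Fin (n + c + 1)) k ⧸ I) = (n + 1 : ℕ) := by
  have e : PrimeSpectrum.zeroLocus (I : Set (MvPolynomial (Fin (n + c + 1)) k)) =
      PrimeSpectrum.zeroLocus (RingHom.ker (projVars k n c) : Set (MvPolynomial (Fin (n + c + 1)) k)) := by
    ext Q
    simp only [PrimeSpectrum.mem_zeroLocus, SetLike.coe_subset_coe]
    exact ⟨h2 _ Q.2, h1.trans⟩
  rw [ringKrullDim_quotient, e, ← ringKrullDim_quotient]
  have := ringKrullDim_eq_of_ringEquiv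
    (Ideal.quotientKerAlgEquivOfSurjective (projVars_surjective k n c)).toRingEquiv
  refine Eq.trans this ?_
  rw [MvPolynomial.ringKrullDim_of_isNoetherianRing]
  simp [ringKrullDim_eq_zero_of_field]

/-- The band matrix. -/
noncomputable def bandMat (k : Type) [Field k] (n c t : ℕ)
    (a : Fin (t + c - 1) → ℤ) (b : Fin t → ℤ) :
    Matrix (Fin t) (Fin (t + c - 1)) (MvPolynomial (Fin (n + c + 1)) k) :=
  fun i j => if h : i.val ≤ j.val ∧ j.val < i.val + c then
    X ⟨j.val - i.val, by omega⟩ ^ (a j - b i).toNat else 0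

theorem stmt3 (k : Type) [Field k] [IsAlgClosed k]
    (n c t : ℕ) (hc : 2 ≤ c) (ht : 1 ≤ t)
    (a : Fin (t + c - 1) → ℤ) (b : Fin t → ℤ)
    (ha : Monotone a) (hb : Monotone b) :
    (∃ A : Matrix (Fin t) (Fin (t + c - 1)) (MvPolynomial (Fin (n + c + 1)) k),
      (∀ (i : Fin t) (j : Fin (t + c - 1)), (A i j).IsHomogeneous (a j - b i).toNat) ∧
      (∀ (i : Fin t) (j : Fin (t + c - 1)), a j - b i ≤ 0 → A i j = 0) ∧
      ringKrullDim ((MvPolynomial (Fin (n + c + 1)) k) ⧸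
        Ideal.span {d : MvPolynomial (Fin (n + c + 1)) k |
          ∃ g : Fin t → Fin (t + c - 1), Function.Injective g ∧
            d = (A.submatrix id g).det}) = (n + 1 : ℕ)) ↔
    (∀ i : Fin t, 0 < a (Fin.castLE (by omega) i) - b i) := by
  constructor
  · rintro ⟨A, hhom, hzero, hdim⟩ i
    by_contra hi
    refine forward_dir k n c t hc A i ?_ ?_ hdim
    · intro r j
      by_cases h : a j - b r ≤ 0
      · rw [hzero r j h, map_zero]
      · rw [constantCoeff_eq]
        apply (hhom r j).coeff_eq_zero
        simp
        omega
    · intro r j hir hji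
      apply hzero
      have h1 : a j ≤ a (Fin.castLE (by omega) i) := ha (by simpa [Fin.le_def] using hji)
      have h2 := hb hir
      omega
  · intro hpos
    have hpos' : ∀ (i : Fin t) (j : Fin (t + c - 1)), i.val ≤ j.val → 0 < a j - b i := by
      intro i j hij
      have h1 : a (Fin.castLE (by omega) i) ≤ a j := ha (by simpa [Fin.le_def] using hij)
      have := hpos i
      omega
    refine ⟨bandMat k n c t a b, ?_, ?_, ?_⟩
    · intro i j
      simp only [bandMat]
      split_ifs
      · simpa using (isHomogeneous_X k _).pow (a j - b i).toNat
      · exact isHomogeneous_zero _ _ _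
    · intro i j h
      simp only [bandMat]
      rw [dif_neg]
      intro h'
      have := hpos' i j h'.1
      omega
    · apply dim_of_zeroLocus
      · have hp : (RingHom.ker (projVars k n c)).IsPrime := RingHom.ker_isPrime _
        have hM : MinorsIn (bandMat k n c t a b) (RingHom.ker (projVars k n c)) := by
          rw [minorsIn_iff]
          refine ⟨fun _ => 1, ⟨⟨0, ht⟩, (Ideal.ne_top_iff_one _).1 hp.ne_top⟩, fun j => ?_⟩
          refine Ideal.sum_mem _ fun i _ => Ideal.mul_mem_left _ _ ?_
          simp only [bandMat]
          split_ifs with h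
          · refine Ideal.pow_mem_of_mem _ ?_ _ (by have := hpos' i j h.1; omega)
            rw [RingHom.mem_ker, projVars, aeval_X, dif_pos]
            change j.val - i.val < c
            omega
          · exact Ideal.zero_mem _
        rw [Ideal.span_le]
        rintro d ⟨g, _, rfl⟩
        rw [SetLike.mem_coe]
        convert hM g
      · intro Q hQ hIQ
        apply ker_projVars_le
        suffices H : ∀ s : ℕ, ∀ j : Fin (n + c + 1), j.val = s → s < c → X j ∈ Q from
          fun j hj => H _ j rfl hj
        intro s
        induction s using Nat.strong_induction_on with
        | _ s ih =>
          intro j hj hsc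
          let g : Fin t → Fin (t + c - 1) := fun i => ⟨i.val + s, by omega⟩
          have hg : Function.Injective g := by
            intro x y hxy
            simp only [g, Fin.mk.injEq] at hxy
            ext; omega
          have hdet : ((bandMat k n c t a b).submatrix id g).det ∈ Q :=
            hIQ (Ideal.subset_span ⟨g, hg, rfl⟩)
          rw [← Ideal.Quotient.eq_zero_iff_mem, RingHom.map_det,
            Matrix.det_of_isUpperTriangular, Finset.prod_eq_zero_iff] at hdet
          · obtain ⟨i, _, h0⟩ := hdet
            rw [RingHom.mapMatrix_apply, Matrix.map_apply, Ideal.Quotient.eq_zero_iff_mem,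
              Matrix.submatrix_apply] at h0
            simp only [bandMat, g, id] at h0
            rw [dif_pos (by omega)] at h0
            have := hQ.mem_of_pow_mem _ h0
            convert this using 2
            ext; simp [hj]
          · intro x y hxy
            simp only [id] at hxy
            rw [RingHom.mapMatrix_apply, Matrix.map_apply, Ideal.Quotient.eq_zero_iff_mem,
              Matrix.submatrix_apply]
            simp only [bandMat, g, id]
            split_ifs with h
            · refine Ideal.pow_mem_of_mem _ ?_ _ (by
                have := hpos' x ⟨y.val + s, by omega⟩ h.1; omega)
              have hxy' : y.val < x.val := hxy
              exact ih (y.val + s - x.val) (by omega) _ rfl (by omega)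
            · exact Q.zero_mem
end

section
/- In codimension 2, for D = R/I_D a Cohen–Macaulay determinantal quotient, there is an isomorphism (I_D/I_D²)^* ≅ Ext¹_R(I_D, I_D), and Ext¹_R(I_D, I_D) ≅ Ext¹_R(I_D, D) ⊗ I_D ≅ K_D(N+1) ⊗ I_D, where K_D is the canonical module of D and (·)^* = Hom_D(·, D). -/
open TensorProduct LinearMap

namespace Stmt9Aux

/-- Maximal ideals of a polynomial ring in `n` variables over a field have height `n`. -/
theorem height_maximal (k : Type) [Field k] (n : ℕ) :
    ∀ (M : Ideal (MvPolynomial (Fin n) k)), M.IsMaximal → M.height = n := by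
  induction n with
  | zero =>
    intro M hM
    have e := MvPolynomial.isEmptyRingEquiv k (Fin 0)
    have h0 : ringKrullDim (MvPolynomial (Fin 0) k) = 0 := by
      rw [ringKrullDim_eq_of_ringEquiv e, ringKrullDim_eq_zero_of_field]
    have := Ideal.height_le_ringKrullDim_of_ne_top hM.ne_top
    rw [h0] at this
    have h2 : M.height ≤ 0 := by exact_mod_cast this
    simpa using h2
  | succ n ih =>
    intro M hM
    let e := (MvPolynomial.finSuccEquiv k n).toRingEquiv
    have hP : (M.map e).IsMaximal := Ideal.map_isMaximal_of_equiv e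
    have hp : ((M.map e).under (MvPolynomial (Fin n) k)).IsMaximal :=
      Polynomial.isMaximal_comap_C_of_isJacobsonRing (M.map e)
    have hl : (M.map e).LiesOver ((M.map e).under (MvPolynomial (Fin n) k)) := ⟨rfl⟩
    have h1 := Polynomial.height_eq_height_add_one
      ((M.map e).under (MvPolynomial (Fin n) k)) (M.map e)
    rw [ih _ hp, e.height_map] at h1
    rw [h1]; norm_cast

theorem not_le_span_prime (k : Type) [Field k] (N : ℕ) (hN : 2 ≤ N)
    (I : Ideal (MvPolynomial (Fin (N + 1)) k))
    (hcodim : ringKrullDim ((MvPolynomial (Fin (N + 1)) k) ⧸ I) = ((N - 1 : ℕ) : ℕ))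
    (p : MvPolynomial (Fin (N + 1)) k) (hp : Prime p) : ¬ I ≤ Ideal.span {p} := by
  intro hle
  obtain ⟨M, hM, hpM⟩ := Ideal.exists_le_maximal (Ideal.span {p})
    (by rw [Ne, Ideal.span_singleton_eq_top]; exact hp.not_isUnit)
  have h1 := Ideal.height_le_ringKrullDim_quotient_add_one
    (hpM (Ideal.mem_span_singleton_self p))
  have h2 := ringKrullDim_le_of_surjective (Ideal.Quotient.factor hle)
    (Ideal.Quotient.factor_surjective hle)
  rw [height_maximal k (N + 1) M hM] at h1
  rw [hcodim] at h2
  have h3 : (((N + 1 : ℕ) : ℕ∞) : WithBot ℕ∞) ≤ ((N - 1 : ℕ) : WithBot ℕ∞) + 1 :=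
    h1.trans (by gcongr)
  have h5 : ((N + 1 : ℕ) : ℕ∞) ≤ ((N - 1 + 1 : ℕ) : ℕ∞) :=
    WithBot.coe_le_coe.1 (h3.trans (le_of_eq (by push_cast; rfl)))
  have h4 : N + 1 ≤ N - 1 + 1 := Nat.cast_le.1 h5
  omega

section gen
variable {R : Type*} [CommRing R]

theorem dvd_of_forall [IsDomain R] [UniqueFactorizationMonoid R] (I : Ideal R)
    (hI : ∀ p : R, Prime p → ¬ I ≤ Ideal.span {p}) (a : R) :
    a ≠ 0 → ∀ c : R, (∀ b ∈ I, a ∣ c * b) → a ∣ c := by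
  refine UniqueFactorizationMonoid.induction_on_prime a ?_ ?_ ?_
  · intro h; exact absurd rfl h
  · intro x hx _ c _
    exact hx.dvd
  · intro a p ha hp ih _ c hc
    obtain ⟨d, rfl⟩ := ih ha c (fun b hb => (Dvd.intro_left p rfl).trans (hc b hb))
    obtain ⟨b, hb, hbp⟩ := Set.not_subset.1 (hI p hp)
    have h := hc b hb
    rw [mul_comm p a, mul_assoc] at h
    have h' := (mul_dvd_mul_iff_left ha).1 h
    rcases hp.dvd_or_dvd h' with h1 | h1
    · rw [mul_comm p a]; exact mul_dvd_mul_left a h1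
    · exact absurd (Ideal.mem_span_singleton.2 h1) hbp

theorem hom_eq_mul [IsDomain R] [UniqueFactorizationMonoid R] (I : Ideal R)
    (hI : ∀ p : R, Prime p → ¬ I ≤ Ideal.span {p}) (f : I →ₗ[R] R) :
    ∃ r : R, ∀ x : I, f x = r * x := by
  by_cases hbot : ∀ a : I, a = 0
  · exact ⟨0, fun x => by simp [hbot x]⟩
  push Not at hbot
  obtain ⟨a, ha⟩ := hbot
  have ha' : (a : R) ≠ 0 := fun h => ha (Subtype.ext h)
  have key : ∀ b : I, f a * b = a * f b := by
    intro b
    have h : (b : R) • a = (a : R) • b := Subtype.ext (by simp [mul_comm])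
    have := congrArg f h
    rw [map_smul, map_smul, smul_eq_mul, smul_eq_mul] at this
    rw [mul_comm, this]
  obtain ⟨r, hr⟩ := dvd_of_forall I hI a ha' (f a)
    (fun b hb => ⟨f ⟨b, hb⟩, key ⟨b, hb⟩⟩)
  refine ⟨r, fun x => ?_⟩
  have := key x
  rw [hr, mul_assoc] at this
  exact (mul_left_cancel₀ ha' this).symm

theorem exists_factor {A B C : Type*} [AddCommGroup A] [AddCommGroup B] [AddCommGroup C]
    [Module R A] [Module R B] [Module R C] (f : A →ₗ[R] B) (hf : Function.Surjective f)
    (g : A →ₗ[R] C) (h : LinearMap.ker f ≤ LinearMap.ker g) : ∃ u : B →ₗ[R] C, u ∘ₗ f = g := by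
  refine ⟨(Submodule.liftQ _ g h) ∘ₗ (f.quotKerEquivOfSurjective hf).symm.toLinearMap, ?_⟩
  ext x
  have : (f.quotKerEquivOfSurjective hf).symm (f x) = Submodule.Quotient.mk x := by
    rw [LinearEquiv.symm_apply_eq]; rfl
  simp [this]

theorem equiv_of_span {A B C W : Type*} [AddCommGroup A] [AddCommGroup B] [AddCommGroup C]
    [AddCommGroup W] [Module R A] [Module R B] [Module R C] [Module R W] (S : Submodule R W)
    (c : A →ₗ[R] B) (d : S →ₗ[R] B) (q : S →ₗ[R] C) (hc : Function.Injective c)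
    (hrange : LinearMap.range c = LinearMap.range d) (hq : Function.Surjective q)
    (hker : LinearMap.ker d = LinearMap.ker q) : Nonempty (A ≃ₗ[R] C) :=
  ⟨(LinearEquiv.ofInjective c hc) ≪≫ₗ (LinearEquiv.ofEq _ _ hrange) ≪≫ₗ
    d.quotKerEquivRange.symm ≪≫ₗ (Submodule.quotEquivOfEq _ _ hker) ≪≫ₗ
    q.quotKerEquivOfSurjective hq⟩

variable {F G IM : Type*} [AddCommGroup F] [Module R F] [Module.Finite R F] [Module.Free R F]
  [AddCommGroup G] [Module R G] [Module.Finite R G] [Module.Free R G]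
  [AddCommGroup IM] [Module R IM]

/-- `coker (Hom(G,M) → Hom(F,M)) ≃ coker (G^* → F^*) ⊗ M`. -/
theorem coker_tensor (α : F →ₗ[R] G) (M : Type*) [AddCommGroup M] [Module R M] :
    Nonempty (((F →ₗ[R] M) ⧸ LinearMap.range (LinearMap.lcomp R M α)) ≃ₗ[R]
      ((Module.Dual R F ⧸ LinearMap.range α.dualMap) ⊗[R] M)) := by
  let eF := dualTensorHomEquiv R F M
  let eG := dualTensorHomEquiv R G M
  have hcomm : eF.toLinearMap ∘ₗ (LinearMap.rTensor M α.dualMap) =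
      (LinearMap.lcomp R M α) ∘ₗ eG.toLinearMap := by
    refine TensorProduct.ext' fun f m => ?_
    ext x
    simp [eF, eG, dualTensorHomEquiv]
  have hex : Function.Exact α.dualMap (LinearMap.range α.dualMap).mkQ :=
    LinearMap.exact_map_mkQ_range _
  have e2 := rTensor.equiv M hex (Submodule.mkQ_surjective _)
  refine ⟨(Submodule.Quotient.equiv _ _ eF ?_).symm ≪≫ₗ e2⟩
  rw [← LinearMap.range_comp, hcomm, LinearMap.range_comp, LinearEquiv.range, Submodule.map_top]

theorem annih (I : Ideal R) (eI : IM ≃ₗ[R] I) (α : F →ₗ[R] G) (β : G →ₗ[R] IM)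
    (hα : Function.Injective α) (hβ : Function.Surjective β) (hexact : Function.Exact α β)
    (a : R) (ha : a ∈ I) : ∃ s : G →ₗ[R] F, s ∘ₗ α = a • LinearMap.id := by
  obtain ⟨g0, hg0⟩ := hβ (eI.symm ⟨a, ha⟩)
  -- the map `a - h ι β`
  let t : G →ₗ[R] G := a • LinearMap.id -
    (LinearMap.toSpanSingleton R G g0) ∘ₗ I.subtype ∘ₗ eI.toLinearMap ∘ₗ β
  have ht : ∀ g, t g ∈ LinearMap.range α := by
    intro g
    rw [LinearMap.mem_range]
    refine (hexact (t g)).1 ?_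
    apply eI.injective
    apply Subtype.ext
    simp [t, hg0, mul_comm]
  let s : G →ₗ[R] F := (LinearEquiv.ofInjective α hα).symm.toLinearMap ∘ₗ
    LinearMap.codRestrict (LinearMap.range α) t ht
  have hs : ∀ g, α (s g) = t g := by
    intro g
    have := LinearEquiv.apply_symm_apply (LinearEquiv.ofInjective α hα)
      (LinearMap.codRestrict (LinearMap.range α) t ht g)
    exact congrArg Subtype.val this
  refine ⟨s, ?_⟩
  ext x
  apply hα
  have hx : β (α x) = 0 := hexact.apply_apply_eq_zero x
  simp [hs, t, hx]

set_option maxHeartbeats 1600000 in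
theorem first_iso (I : Ideal R) (eI : IM ≃ₗ[R] I) (α : F →ₗ[R] G) (β : G →ₗ[R] IM)
    (hα : Function.Injective α) (hβ : Function.Surjective β) (hexact : Function.Exact α β)
    (hhom : ∀ f : I →ₗ[R] R, ∃ r : R, ∀ x : I, f x = r * x) :
    Nonempty ((I.Cotangent →ₗ[R] (R ⧸ I)) ≃ₗ[R]
      ((F →ₗ[R] IM) ⧸ LinearMap.range (LinearMap.lcomp R IM α))) := by
  let ι : IM →ₗ[R] R := I.subtype ∘ₗ eI.toLinearMap
  have hιI : ∀ x, ι x ∈ I := fun x => (eI x).2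
  have hι : Function.Injective ι := Subtype.val_injective.comp eI.injective
  have lift' : ∀ (u : F →ₗ[R] R),
      (∀ x, u x ∈ I) → ∃ v : F →ₗ[R] IM, ι ∘ₗ v = u := by
    intro u hu
    refine ⟨eI.symm.toLinearMap ∘ₗ LinearMap.codRestrict I u hu, ?_⟩
    ext x
    simp [ι]
  let γ : G →ₗ[R] I.Cotangent := I.toCotangent ∘ₗ eI.toLinearMap ∘ₗ β
  have hγ : Function.Surjective γ :=
    I.toCotangent_surjective.comp (eI.surjective.comp hβ)
  let c : (I.Cotangent →ₗ[R] (R ⧸ I)) →ₗ[R] (G →ₗ[R] (R ⧸ I)) := LinearMap.lcomp R (R ⧸ I) γ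
  have hc : Function.Injective c := by
    intro u v huv
    ext y
    obtain ⟨x, rfl⟩ := hγ y
    exact LinearMap.congr_fun huv x
  let S : Submodule R ((G →ₗ[R] R) × (F →ₗ[R] IM)) :=
    LinearMap.ker ((LinearMap.lcomp R R α) ∘ₗ LinearMap.fst R _ _ -
      (LinearMap.llcomp R F IM R ι) ∘ₗ LinearMap.snd R _ _)
  have hS : ∀ z, z ∈ S ↔ z.1 ∘ₗ α = ι ∘ₗ z.2 := by
    intro z
    rw [LinearMap.mem_ker, LinearMap.sub_apply, sub_eq_zero]
    rfl
  let d : S →ₗ[R] (G →ₗ[R] (R ⧸ I)) :=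
    (LinearMap.llcomp R G R (R ⧸ I) I.mkQ) ∘ₗ LinearMap.fst R _ _ ∘ₗ S.subtype
  let q : S →ₗ[R] ((F →ₗ[R] IM) ⧸ LinearMap.range (LinearMap.lcomp R IM α)) :=
    Submodule.mkQ _ ∘ₗ LinearMap.snd R _ _ ∘ₗ S.subtype
  have hd : ∀ z : S, ∀ x, d z x = Ideal.Quotient.mk I (z.1.1 x) := fun z x => rfl
  have hzero : ∀ x : F, β (α x) = 0 := fun x => hexact.apply_apply_eq_zero x
  have hrange : LinearMap.range c = LinearMap.range d := by
    apply le_antisymm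
    · rintro _ ⟨φ, rfl⟩
      obtain ⟨ψ, hψ⟩ := Module.projective_lifting_property I.mkQ (c φ) I.mkQ_surjective
      obtain ⟨f, hf⟩ := lift' (ψ ∘ₗ α) (by
        intro x
        have := LinearMap.congr_fun hψ (α x)
        rw [← Ideal.Quotient.eq_zero_iff_mem]
        refine this.trans ?_
        simp [c, γ, hzero])
      exact ⟨⟨(ψ, f), (hS _).2 hf.symm⟩, hψ⟩
    · rintro _ ⟨z, rfl⟩
      have hz := (hS _).1 z.2
      obtain ⟨u, hu⟩ := exists_factor β hβ (d z) (by
        intro g hg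
        obtain ⟨x, rfl⟩ := (hexact g).1 hg
        rw [LinearMap.mem_ker, hd, Ideal.Quotient.eq_zero_iff_mem]
        have := LinearMap.congr_fun hz x
        simp only [LinearMap.comp_apply] at this
        rw [this]
        exact hιI _)
      obtain ⟨v, hv⟩ := exists_factor I.toCotangent I.toCotangent_surjective
        (u ∘ₗ eI.symm.toLinearMap) (by
          have : LinearMap.ker I.toCotangent = (I • ⊤ : Submodule R I) := Submodule.ker_mkQ _
          rw [this, Submodule.smul_le]
          intro a ha x _
          rw [LinearMap.mem_ker, map_smul, Algebra.smul_def]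
          have : algebraMap R (R ⧸ I) a = 0 := Ideal.Quotient.eq_zero_iff_mem.2 ha
          rw [this, zero_mul])
      refine ⟨v, ?_⟩
      rw [← hu]
      ext x
      have := LinearMap.congr_fun hv (eI (β x))
      simp only [LinearMap.comp_apply, LinearEquiv.coe_coe, LinearEquiv.symm_apply_apply] at this
      exact this
  have hq : Function.Surjective q := by
    refine (Submodule.mkQ_surjective _).comp ?_
    intro f
    -- every map `F → I ⊂ R` extends to `G`
    let b := Module.Free.chooseBasis R F
    have hs := fun i => annih I eI α β hα hβ hexact (ι (f (b i))) (hιI _)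
    choose s hs using hs
    let ψ : G →ₗ[R] R := ∑ i, (b.coord i) ∘ₗ (s i)
    have hψ : ψ ∘ₗ α = ι ∘ₗ f := by
      refine b.ext fun j => ?_
      have h1 : ∀ i, s i (α (b j)) = ι (f (b i)) • b j := fun i =>
        LinearMap.congr_fun (hs i) (b j)
      simp only [ψ, LinearMap.comp_apply, LinearMap.sum_apply, h1, map_smul, smul_eq_mul,
        Module.Basis.coord_apply, Module.Basis.repr_self]
      rw [Finset.sum_eq_single j]
      · simp
      · intro i _ hij
        simp [hij.symm]
      · simp
    exact ⟨⟨(ψ, f), (hS _).2 hψ⟩, rfl⟩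
  have hker : LinearMap.ker d = LinearMap.ker q := by
    ext z
    have hz := (hS _).1 z.2
    constructor
    · intro h
      obtain ⟨g, hg⟩ : ∃ g : G →ₗ[R] IM, ι ∘ₗ g = z.1.1 := by
        refine ⟨eI.symm.toLinearMap ∘ₗ LinearMap.codRestrict I z.1.1 ?_, ?_⟩
        · intro x
          have := LinearMap.congr_fun (LinearMap.mem_ker.1 h) x
          rw [hd] at this
          exact Ideal.Quotient.eq_zero_iff_mem.1 this
        · ext x
          simp [ι]
      rw [LinearMap.mem_ker]
      refine (Submodule.Quotient.mk_eq_zero _).2 ⟨g, ?_⟩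
      ext x
      apply hι
      have h1 := LinearMap.congr_fun hz x
      rw [← hg] at h1
      exact h1
    · intro h
      rw [LinearMap.mem_ker] at h
      obtain ⟨g, hg⟩ := (Submodule.Quotient.mk_eq_zero _).1 h
      have hg' : ∀ x, g (α x) = z.1.2 x := fun x => LinearMap.congr_fun hg x
      obtain ⟨u, hu⟩ := exists_factor β hβ (z.1.1 - ι ∘ₗ g) (by
        intro y hy
        obtain ⟨x, rfl⟩ := (hexact y).1 hy
        have h1 := LinearMap.congr_fun hz x
        simp only [LinearMap.comp_apply] at h1
        simp [h1, hg'])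
      obtain ⟨r, hr⟩ := hhom (u ∘ₗ eI.symm.toLinearMap)
      rw [LinearMap.mem_ker]
      apply LinearMap.ext
      intro x
      rw [hd, LinearMap.zero_apply, Ideal.Quotient.eq_zero_iff_mem]
      have h1 := LinearMap.congr_fun hu x
      have h2 := hr (eI (β x))
      simp only [LinearMap.comp_apply, LinearEquiv.coe_coe, LinearEquiv.symm_apply_apply,
        LinearMap.sub_apply] at h1 h2
      rw [h2] at h1
      rw [← sub_add_cancel (z.1.1 x) (ι (g x)), ← h1]
      exact I.add_mem (I.mul_mem_left _ (eI (β x)).2) (hιI _)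
  exact equiv_of_span S c d q hc hrange hq hker

theorem coker_D (I : Ideal R) (eI : IM ≃ₗ[R] I) (α : F →ₗ[R] G) (β : G →ₗ[R] IM)
    (hα : Function.Injective α) (hβ : Function.Surjective β) (hexact : Function.Exact α β) :
    Nonempty (((F →ₗ[R] (R ⧸ I)) ⧸ LinearMap.range (LinearMap.lcomp R (R ⧸ I) α)) ≃ₗ[R]
      (Module.Dual R F ⧸ LinearMap.range α.dualMap)) := by
  obtain ⟨e⟩ := coker_tensor α (R ⧸ I)
  refine ⟨e ≪≫ₗ tensorQuotEquivQuotSMul _ I ≪≫ₗ Submodule.quotEquivOfEqBot _ ?_⟩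
  rw [eq_bot_iff, Submodule.smul_le]
  intro a ha x _
  obtain ⟨f, rfl⟩ := Submodule.mkQ_surjective _ x
  obtain ⟨s, hs⟩ := annih I eI α β hα hβ hexact a ha
  rw [Submodule.mem_bot, ← map_smul]
  refine (Submodule.Quotient.mk_eq_zero _).2 ⟨f ∘ₗ s, ?_⟩
  ext x
  have := LinearMap.congr_fun hs x
  simp only [LinearMap.comp_apply] at this
  simp [LinearMap.dualMap_apply, this]

end gen

end Stmt9Aux

/-- For `D = R/I_D` a codimension 2 Cohen–Macaulay determinantal
quotient of `R = k[x_0,…,x_N]` with Hilbert–Burch resolution `0 → F → G → I_D → 0`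
(the ideal `I_D` realized as the module `IM`), there are (graded, twists suppressed)
isomorphisms `(I_D/I_D²)^* ≅ Ext¹_R(I_D, I_D) ≅ Ext¹_R(I_D, D) ⊗ I_D ≅ K_D(N+1) ⊗ I_D`,
where the `Ext¹` groups are computed from the resolution (`Ext¹_R(I_D, M) =
coker (Hom(G,M) → Hom(F,M))`) and `K_D(N+1) = Ext¹_R(I_D, R) = coker (G^* → F^*)`. -/
theorem stmt9 (k : Type) [Field k] (N : ℕ) (hN : 2 ≤ N)
    (I : Ideal (MvPolynomial (Fin (N + 1)) k))
    (F G IM : Type) [AddCommGroup F] [Module (MvPolynomial (Fin (N + 1)) k) F]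
    [Module.Finite (MvPolynomial (Fin (N + 1)) k) F]
    [Module.Free (MvPolynomial (Fin (N + 1)) k) F]
    [AddCommGroup G] [Module (MvPolynomial (Fin (N + 1)) k) G]
    [Module.Finite (MvPolynomial (Fin (N + 1)) k) G]
    [Module.Free (MvPolynomial (Fin (N + 1)) k) G]
    [AddCommGroup IM] [Module (MvPolynomial (Fin (N + 1)) k) IM]
    -- `IM` is the ideal `I_D` viewed as an `R`-module
    (eI : IM ≃ₗ[MvPolynomial (Fin (N + 1)) k] I)
    (α : F →ₗ[MvPolynomial (Fin (N + 1)) k] G)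
    (β : G →ₗ[MvPolynomial (Fin (N + 1)) k] IM)
    (hα : Function.Injective α) (hβ : Function.Surjective β) (hexact : Function.Exact α β)
    (hcodim : ringKrullDim ((MvPolynomial (Fin (N + 1)) k) ⧸ I) = ((N - 1 : ℕ) : ℕ)) :
    Nonempty ((I.Cotangent →ₗ[MvPolynomial (Fin (N + 1)) k]
        ((MvPolynomial (Fin (N + 1)) k) ⧸ I)) ≃ₗ[MvPolynomial (Fin (N + 1)) k]
      ((F →ₗ[MvPolynomial (Fin (N + 1)) k] IM) ⧸
        LinearMap.range (LinearMap.lcomp (MvPolynomial (Fin (N + 1)) k) IM α))) ∧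
    Nonempty (((F →ₗ[MvPolynomial (Fin (N + 1)) k] IM) ⧸
        LinearMap.range (LinearMap.lcomp (MvPolynomial (Fin (N + 1)) k) IM α))
      ≃ₗ[MvPolynomial (Fin (N + 1)) k]
      (((F →ₗ[MvPolynomial (Fin (N + 1)) k] ((MvPolynomial (Fin (N + 1)) k) ⧸ I)) ⧸
          LinearMap.range (LinearMap.lcomp (MvPolynomial (Fin (N + 1)) k)
            ((MvPolynomial (Fin (N + 1)) k) ⧸ I) α))
        ⊗[MvPolynomial (Fin (N + 1)) k] IM)) ∧
    Nonempty ((((F →ₗ[MvPolynomial (Fin (N + 1)) k]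
          ((MvPolynomial (Fin (N + 1)) k) ⧸ I)) ⧸
          LinearMap.range (LinearMap.lcomp (MvPolynomial (Fin (N + 1)) k)
            ((MvPolynomial (Fin (N + 1)) k) ⧸ I) α))
        ⊗[MvPolynomial (Fin (N + 1)) k] IM)
      ≃ₗ[MvPolynomial (Fin (N + 1)) k]
      (((Module.Dual (MvPolynomial (Fin (N + 1)) k) F) ⧸ LinearMap.range α.dualMap)
        ⊗[MvPolynomial (Fin (N + 1)) k] IM)) := by
  obtain ⟨e1⟩ := Stmt9Aux.first_iso I eI α β hα hβ hexact
    (Stmt9Aux.hom_eq_mul I (Stmt9Aux.not_le_span_prime k N hN I hcodim))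
  obtain ⟨e2⟩ := Stmt9Aux.coker_tensor α IM
  obtain ⟨e3⟩ := Stmt9Aux.coker_D I eI α β hα hβ hexact
  exact ⟨⟨e1⟩, ⟨e2 ≪≫ₗ (TensorProduct.congr e3 (LinearEquiv.refl _ _)).symm⟩,
    ⟨TensorProduct.congr e3 (LinearEquiv.refl _ _)⟩⟩
end

section
/- Dualizing the exact sequence 0 → R(a) → B_c → B_{c−1} → 0 of graded R-modules, where B_i = coker(φ_i) and M_i = Ext¹_R(B_i, R) as in the standard determinantal setup, yields a short exact sequence 0 → Hom_R(B_{c−1}, R) → Hom_R(B_c, R) → I_{D_{c−1}}(−a) → 0, where a = a_{t+c−2} and I_{D_{c−1}} is the determinantal ideal of the submatrix with the last column deleted. -/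
/-! ### Part 1: regular sequences in polynomial rings -/

namespace DetAux

open Polynomial in
/-- `I` contains a (weakly) regular sequence of length `c`. -/
def HasReg {R : Type*} [CommRing R] (I : Ideal R) (c : ℕ) : Prop :=
  ∃ x : ℕ → R, (∀ j < c, x j ∈ I) ∧
    ∀ j < c, ∀ r, x j * r ∈ Ideal.span (x '' Set.Iio j) → r ∈ Ideal.span (x '' Set.Iio j)

lemma HasReg.of_equiv {R S : Type*} [CommRing R] [CommRing S] (e : R ≃+* S) {I : Ideal R}
    {I' : Ideal S} (hI : ∀ x ∈ I', e.symm x ∈ I) {c : ℕ} (h : HasReg I' c) : HasReg I c := by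
  obtain ⟨x, hx, hreg⟩ := h
  refine ⟨fun j => e.symm (x j), fun j hj => hI _ (hx j hj), fun j hj r hr => ?_⟩
  have key : Ideal.span ((fun j => e.symm (x j)) '' Set.Iio j) =
      (Ideal.span (x '' Set.Iio j)).map (e.symm : S →+* R) := by
    rw [Ideal.map_span, ← Set.image_comp]; rfl
  rw [key] at hr ⊢
  have h1 := Ideal.mem_map_of_mem (e : R →+* S) hr
  have h2 : ((Ideal.span (x '' Set.Iio j)).map (e.symm : S →+* R)).map (e : R →+* S)
      = Ideal.span (x '' Set.Iio j) := by
    rw [Ideal.map_map]; simp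
  rw [h2] at h1
  have h3 := hreg j hj (e r) (by simpa using h1)
  have := Ideal.mem_map_of_mem (e.symm : S →+* R) h3
  simpa using this

open Polynomial in
lemma HasReg.polynomial {S : Type*} [CommRing S] (I : Ideal S[X]) {c : ℕ} {f : S[X]}
    (hf : f.Monic) (hfI : f ∈ I) (h : HasReg (I.comap (C : S →+* S[X])) c) :
    HasReg I (c + 1) := by
  obtain ⟨x, hx, hreg⟩ := h
  set x' : ℕ → S[X] := fun j => if j < c then C (x j) else f with hx'
  have key : ∀ j ≤ c, Ideal.span (x' '' Set.Iio j) =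
      (Ideal.span (x '' Set.Iio j)).map (C : S →+* S[X]) := by
    intro j hj
    rw [Ideal.map_span, ← Set.image_comp]
    congr 1
    apply Set.image_congr
    intro i hi
    have : i < c := lt_of_lt_of_le hi hj
    simp [hx', this]
  refine ⟨x', fun j hj => ?_, fun j hj r hr => ?_⟩
  · by_cases hjc : j < c
    · simpa [hx', hjc] using hx j hjc
    · simpa [hx', hjc] using hfI
  · rw [key j (by omega)] at hr ⊢
    by_cases hjc : j < c
    · rw [Ideal.mem_map_C_iff] at hr ⊢
      intro n
      have := hr n
      simp only [hx', hjc, if_true, coeff_C_mul] at this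
      exact hreg j hjc _ this
    · simp only [hx', hjc, if_false] at hr
      set K := Ideal.span (x '' Set.Iio j)
      have h0 : ∀ p : S[X], p ∈ K.map (C : S →+* S[X]) ↔
          p.map (Ideal.Quotient.mk K) = 0 := by
        intro p
        rw [Ideal.mem_map_C_iff, Polynomial.ext_iff]
        simp [Ideal.Quotient.eq_zero_iff_mem]
      rw [h0] at hr ⊢
      rw [Polynomial.map_mul] at hr
      exact (hf.map (Ideal.Quotient.mk K)).mul_right_eq_zero_iff.mp hr

lemma dim_le_of_integral {R S : Type*} [CommRing R] [CommRing S] [Algebra R S]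
    [Algebra.IsIntegral R S] (hinj : Function.Injective (algebraMap R S)) :
    ringKrullDim R ≤ ringKrullDim S := by
  refine iSup_le fun l => ?_
  obtain ⟨Q, -, hQ, hQl⟩ := Ideal.exists_ideal_over_prime_of_isIntegral (S := S)
    (RelSeries.head l).asIdeal (⊥ : Ideal S) (by
      intro x hx
      have : x = 0 := hinj (by simpa using hx)
      simp [this])
  haveI : Q.LiesOver (RelSeries.head l).asIdeal := ⟨hQl.symm⟩
  obtain ⟨L, hL, -⟩ := Ideal.exists_ltSeries_of_hasGoingUp l Q
  rw [← hL]
  exact le_iSup (fun p : LTSeries (PrimeSpectrum S) => ((p.length : ℕ∞) : WithBot ℕ∞)) L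

section NN
open Polynomial MvPolynomial Ideal Nat RingHom List

variable {k : Type*} [Field k] {n : ℕ} (f : MvPolynomial (Fin (n + 1)) k)
variable (v w : Fin (n + 1) →₀ ℕ)

variable {f v} in
lemma lt_up (vlt : ∀ i, v i < 2 + f.totalDegree) : ∀ l ∈ ofFn v, l < 2 + f.totalDegree := by
  grind

/-- change of coordinates -/
noncomputable abbrev T1 (c : k) :
    MvPolynomial (Fin (n + 1)) k →ₐ[k] MvPolynomial (Fin (n + 1)) k :=
  aeval fun i ↦ if i = 0 then X 0 else X i + c • X 0 ^ ((2 + f.totalDegree) ^ i.1)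

lemma t1_comp_t1_neg (c : k) : (T1 f c).comp (T1 f (-c)) = AlgHom.id _ _ := by
  rw [comp_aeval, ← MvPolynomial.aeval_X_left]
  ext i v
  cases i using Fin.cases <;> simp

/-- `T1 f 1` leads to an algebra equiv `T f`. -/
noncomputable abbrev T := AlgEquiv.ofAlgHom (T1 f 1) (T1 f (-1))
  (t1_comp_t1_neg f 1) (by simpa using t1_comp_t1_neg f (-1))

lemma sum_r_mul_ne (vlt : ∀ i, v i < 2 + f.totalDegree) (wlt : ∀ i, w i < 2 + f.totalDegree) (ne : v ≠ w) :
    ∑ x : Fin (n + 1), (2 + f.totalDegree) ^ x.1 * v x ≠ ∑ x : Fin (n + 1), (2 + f.totalDegree) ^ x.1 * w x := by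
  intro h
  refine ne <| Finsupp.ext <| congrFun <| ofFn_inj.mp ?_
  apply ofDigits_inj_of_len_eq (Nat.lt_add_right f.totalDegree one_lt_two)
    (by simp) (lt_up vlt) (lt_up wlt)
  simpa only [ofDigits_eq_sum_mapIdx, mapIdx_eq_ofFn, get_ofFn, length_ofFn,
    Fin.val_cast, mul_comm, sum_ofFn] using! h

lemma degreeOf_zero_t {a : k} (ha : a ≠ 0) : ((T f) (monomial v a)).degreeOf 0 =
    ∑ i : Fin (n + 1), ((2 + f.totalDegree) ^ i.1) * v i := by
  rw [← natDegree_finSuccEquiv, monomial_eq, Finsupp.prod_pow v fun a ↦ X a]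
  simp only [Fin.prod_univ_succ, Fin.sum_univ_succ, map_mul, map_prod, map_pow,
    AlgEquiv.ofAlgHom_apply, MvPolynomial.aeval_C, MvPolynomial.aeval_X, if_pos, Fin.succ_ne_zero,
    ite_false, one_smul, map_add, finSuccEquiv_X_zero, finSuccEquiv_X_succ, algebraMap_eq]
  have h (i : Fin n) :
      (Polynomial.C (X (R := k) i) + Polynomial.X ^ ((2 + f.totalDegree) ^ i.succ.1)) ^ v i.succ ≠ 0 :=
    pow_ne_zero (v i.succ) (leadingCoeff_ne_zero.mp <| by simp [add_comm, leadingCoeff_X_pow_add_C])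
  rw [natDegree_mul (by simp [ha]) (mul_ne_zero (by simp) (Finset.prod_ne_zero_iff.mpr
    (fun i _ ↦ h i))), natDegree_mul (by simp) (Finset.prod_ne_zero_iff.mpr (fun i _ ↦ h i)),
    natDegree_prod _ _ (fun i _ ↦ h i), natDegree_finSuccEquiv, degreeOf_C]
  simpa only [natDegree_pow, zero_add, natDegree_X, mul_one, Fin.val_zero, pow_zero, one_mul,
    add_right_inj] using Finset.sum_congr rfl (fun i _ ↦ by
    rw [add_comm (Polynomial.C _), natDegree_X_pow_add_C, mul_comm])

lemma degreeOf_t_ne_of_ne (hv : v ∈ f.support) (hw : w ∈ f.support) (ne : v ≠ w) :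
    (T f <| monomial v <| coeff v f).degreeOf 0 ≠
    (T f <| monomial w <| coeff w f).degreeOf 0 := by
  rw [degreeOf_zero_t _ _ <| mem_support_iff.mp hv, degreeOf_zero_t _ _ <| mem_support_iff.mp hw]
  refine sum_r_mul_ne f v w (fun i ↦ ?_) (fun i ↦ ?_) ne <;>
  exact lt_of_le_of_lt ((monomial_le_degreeOf i ‹_›).trans (degreeOf_le_totalDegree f i))
    (by lia)

lemma leadingCoeff_finSuccEquiv_t :
    (finSuccEquiv k n ((T f) ((monomial v) (coeff v f)))).leadingCoeff =
    algebraMap k _ (coeff v f) := by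
  rw [monomial_eq, Finsupp.prod_fintype]
  · simp only [map_mul, map_prod, leadingCoeff_mul, leadingCoeff_prod]
    rw [AlgEquiv.ofAlgHom_apply, algHom_C, algebraMap_eq, finSuccEquiv_apply,
      eval₂Hom_C, coe_comp]
    simp only [AlgEquiv.ofAlgHom_apply, Function.comp_apply, leadingCoeff_C, map_pow,
      leadingCoeff_pow, algebraMap_eq]
    have : ∀ j, ((finSuccEquiv k n) ((T1 f) 1 (X j))).leadingCoeff = 1 := fun j ↦ by
      by_cases h : j = 0
      · simp [h, finSuccEquiv_apply]
      · simp only [aeval_eq_bind₁, bind₁_X_right, if_neg h, one_smul, map_add, map_pow]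
        obtain ⟨i, rfl⟩ := Fin.exists_succ_eq.mpr h
        simp [finSuccEquiv_X_succ, finSuccEquiv_X_zero, add_comm]
    simp only [this, one_pow, Finset.prod_const_one, mul_one]
  exact fun i ↦ pow_zero _

lemma T_leadingcoeff_isUnit (fne : f ≠ 0) :
    IsUnit (finSuccEquiv k n (T f f)).leadingCoeff := by
  obtain ⟨v, vin, vs⟩ := Finset.exists_max_image f.support
    (fun v ↦ (T f ((monomial v) (coeff v f))).degreeOf 0) (support_nonempty.mpr fne)
  set h := fun w ↦ (MvPolynomial.monomial w) (coeff w f)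
  simp only [← natDegree_finSuccEquiv] at vs
  replace vs : ∀ x ∈ f.support \ {v}, (finSuccEquiv k n ((T f) (h x))).degree <
      (finSuccEquiv k n ((T f) (h v))).degree := by
    intro x hx
    obtain ⟨h1, h2⟩ := Finset.mem_sdiff.mp hx
    apply degree_lt_degree <| lt_of_le_of_ne (vs x h1) ?_
    simpa only [natDegree_finSuccEquiv]
      using degreeOf_t_ne_of_ne f _ _ h1 vin <| ne_of_not_mem_cons h2
  have coeff : (finSuccEquiv k n ((T f) (h v + ∑ x ∈ f.support \ {v}, h x))).leadingCoeff =
      (finSuccEquiv k n ((T f) (h v))).leadingCoeff := by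
    simp only [map_add, map_sum]
    rw [add_comm]
    apply leadingCoeff_add_of_degree_lt <| (lt_of_le_of_lt <| degree_sum_le _ _) ?_
    have h2 : h v ≠ 0 := by simpa [h] using mem_support_iff.mp vin
    replace h2 : (finSuccEquiv k n ((T f) (h v))) ≠ 0 := fun eq ↦ h2 <|
      by simpa only [map_eq_zero_iff _ (AlgEquiv.injective _)] using eq
    exact (Finset.sup_lt_iff <| Ne.bot_lt (fun x ↦ h2 <| degree_eq_bot.mp x)).mpr vs
  nth_rw 2 [← f.support_sum_monomial_coeff]
  rw [Finset.sum_eq_add_sum_sdiff_singleton_of_mem vin h]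
  rw [leadingCoeff_finSuccEquiv_t] at coeff
  simpa only [coeff, algebraMap_eq] using (mem_support_iff.mp vin).isUnit.map MvPolynomial.C

end NN

lemma ringKrullDim_map_equiv {R S : Type*} [CommRing R] [CommRing S] (e : R ≃+* S) (I : Ideal R) :
    ringKrullDim (S ⧸ I.map (e : R →+* S)) = ringKrullDim (R ⧸ I) :=
  (ringKrullDim_eq_of_ringEquiv (Ideal.quotientEquiv I (I.map (e : R →+* S)) e rfl)).symm

open Polynomial in
lemma dim_comap_C_le {R : Type*} [CommRing R] (I1 : Ideal R[X]) {f : R[X]} (hmon : f.Monic)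
    (hmem : f ∈ I1) : ringKrullDim (R ⧸ I1.comap (C : R →+* R[X])) ≤ ringKrullDim (R[X] ⧸ I1) := by
  have hint := hmon.quotient_isIntegral hmem
  letI : Algebra (R ⧸ I1.comap (C : R →+* R[X])) (R[X] ⧸ I1) :=
    (Ideal.quotientMap I1 (C : R →+* R[X]) le_rfl).toAlgebra
  haveI : Algebra.IsIntegral (R ⧸ I1.comap (C : R →+* R[X])) (R[X] ⧸ I1) := by
    constructor
    intro z
    obtain ⟨p, hp, hpz⟩ := hint z
    refine ⟨p.map (Ideal.Quotient.mk _), hp.map _, ?_⟩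
    rw [eval₂_map]
    exact hpz
  exact dim_le_of_integral (Ideal.quotientMap_injective)

open Polynomial in
theorem hasReg_mvPolynomial {k : Type*} [Field k] (N : ℕ) : ∀ (I : Ideal (MvPolynomial (Fin N) k))
    (c d : ℕ), d + c ≤ N → ringKrullDim (MvPolynomial (Fin N) k ⧸ I) ≤ (d : ℕ) → HasReg I c := by
  induction N with
  | zero =>
    intro I c d h _
    obtain rfl : c = 0 := by omega
    exact ⟨fun _ => 0, by simp, by simp⟩
  | succ N ih =>
    intro I c d h hd
    cases c with
    | zero => exact ⟨fun _ => 0, by simp, by simp⟩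
    | succ c =>
      have hI : I ≠ ⊥ := by
        rintro rfl
        rw [ringKrullDim_eq_of_ringEquiv (RingEquiv.quotientBot _),
          MvPolynomial.ringKrullDim_of_isNoetherianRing, ringKrullDim_eq_zero_of_field] at hd
        simp only [Nat.card_eq_fintype_card, Fintype.card_fin, zero_add] at hd
        have : N + 1 ≤ d := by exact_mod_cast hd
        omega
      obtain ⟨f, fI, fne⟩ := Submodule.exists_mem_ne_zero_of_ne_bot hI
      obtain ⟨e, hu⟩ : ∃ e : MvPolynomial (Fin (N + 1)) k ≃+* (MvPolynomial (Fin N) k)[X],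
          IsUnit (e f).leadingCoeff :=
        ⟨((T f).trans (MvPolynomial.finSuccEquiv k N)).toRingEquiv, T_leadingcoeff_isUnit f fne⟩
      set I1 : Ideal (MvPolynomial (Fin N) k)[X] :=
        I.map (e : MvPolynomial (Fin (N + 1)) k →+* (MvPolynomial (Fin N) k)[X]) with hI1
      have hmon : (hu.unit⁻¹.val • e f).Monic := monic_of_isUnit_leadingCoeff_inv_smul hu
      have hef : e f ∈ I1 := Ideal.mem_map_of_mem
        (e : MvPolynomial (Fin (N + 1)) k →+* (MvPolynomial (Fin N) k)[X]) fI
      have hmem : hu.unit⁻¹.val • e f ∈ I1 := by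
        rw [Polynomial.smul_eq_C_mul]; exact I1.mul_mem_left _ hef
      refine HasReg.of_equiv e (I' := I1) ?_ ?_
      · intro x hx
        have := Ideal.mem_map_of_mem
          (e.symm : (MvPolynomial (Fin N) k)[X] →+* MvPolynomial (Fin (N + 1)) k) hx
        rw [hI1, Ideal.map_map] at this
        simpa using this
      · refine HasReg.polynomial I1 hmon hmem (ih _ c d (by omega) ?_)
        refine le_trans ?_ ((ringKrullDim_map_equiv e I).le.trans hd)
        exact dim_comap_C_le I1 hmon hmem

end DetAux
namespace DetAux

section Fock

variable {m : ℕ} {R : Type*} [CommRing R]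

/-- sign -/
def sg (R : Type*) [CommRing R] {m : ℕ} (j : Fin m) (S : Finset (Fin m)) : R :=
  (-1) ^ (S.filter (· < j)).card

lemma sg_insert (i j : Fin m) (S : Finset (Fin m)) (h : i ∉ S) :
    sg R j (insert i S) = if i < j then - sg R j S else sg R j S := by
  unfold sg
  rw [Finset.filter_insert]
  split_ifs with hij
  · rw [Finset.card_insert_of_notMem (by simp [h]), pow_succ]; ring
  · rfl

lemma sg_erase (i j : Fin m) (S : Finset (Fin m)) (h : i ∈ S) :
    sg R j (S.erase i) = if i < j then - sg R j S else sg R j S := by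
  have := sg_insert (R := R) i j (S.erase i) (by simp)
  rw [Finset.insert_erase h] at this
  rw [this]
  split_ifs <;> simp

lemma sg_mul_self (j : Fin m) (S : Finset (Fin m)) : sg R j S * sg R j S = 1 := by
  unfold sg
  rw [← mul_pow]; simp

/-- annihilation -/
def an (R : Type*) [CommRing R] {m : ℕ} (j : Fin m) : Module.End R (Finset (Fin m) → R) where
  toFun z S := if j ∈ S then 0 else sg R j S * z (insert j S)
  map_add' x y := by ext S; simp only [Pi.add_apply]; split_ifs <;> ring
  map_smul' r x := by
    ext S; simp only [Pi.smul_apply, smul_eq_mul, RingHom.id_apply]; split_ifs <;> ring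

/-- creation -/
def cr (R : Type*) [CommRing R] {m : ℕ} (j : Fin m) : Module.End R (Finset (Fin m) → R) where
  toFun z S := if j ∈ S then sg R j S * z (S.erase j) else 0
  map_add' x y := by ext S; simp only [Pi.add_apply]; split_ifs <;> ring
  map_smul' r x := by
    ext S; simp only [Pi.smul_apply, smul_eq_mul, RingHom.id_apply]; split_ifs <;> ring

lemma an_apply (j : Fin m) (z : Finset (Fin m) → R) (S) :
    an R j z S = if j ∈ S then 0 else sg R j S * z (insert j S) := rfl

lemma cr_apply (j : Fin m) (z : Finset (Fin m) → R) (S) :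
    cr R j z S = if j ∈ S then sg R j S * z (S.erase j) else 0 := rfl

lemma an_sq (j : Fin m) : an R j * an R j = 0 := by
  ext1 z; ext S
  simp [Module.End.mul_apply, an_apply]

lemma an_an (i j : Fin m) : an R i * an R j + an R j * an R i = 0 := by
  by_cases hij : i = j
  · subst hij; simp [an_sq]
  refine LinearMap.ext fun z => ?_
  ext S
  simp only [LinearMap.add_apply, Module.End.mul_apply, an_apply, Pi.add_apply,
    LinearMap.zero_apply, Pi.zero_apply, Finset.mem_insert, hij, Ne.symm hij, false_or]
  by_cases hi : i ∈ S
  · simp [hi]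
  by_cases hj : j ∈ S
  · simp [hj]
  simp only [hi, hj, if_false, sg_insert i j S hi, sg_insert j i S hj, Finset.insert_comm j i S]
  rcases lt_or_gt_of_ne hij with h | h
  · simp only [h, not_lt_of_gt h, if_true, if_false]; ring
  · simp only [h, not_lt_of_gt h, if_true, if_false]; ring

lemma cr_an (i j : Fin m) :
    cr R i * an R j + an R j * cr R i = if i = j then 1 else 0 := by
  refine LinearMap.ext fun z => ?_
  ext S
  by_cases hij : i = j
  · subst hij
    by_cases hi : i ∈ S
    · simp only [LinearMap.add_apply, Module.End.mul_apply, an_apply, cr_apply, Pi.add_apply, hi,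
        if_true, sg_erase i i S hi, lt_irrefl, if_false, Finset.notMem_erase, Finset.insert_erase,
        ← mul_assoc, sg_mul_self, Module.End.one_apply]
      ring
    · simp only [LinearMap.add_apply, Module.End.mul_apply, an_apply, cr_apply, Pi.add_apply, hi,
        if_true, sg_insert i i S hi, lt_irrefl, if_false, Finset.mem_insert_self,
        Finset.erase_insert hi,
        ← mul_assoc, sg_mul_self, Module.End.one_apply]
      ring
  · simp only [LinearMap.add_apply, Module.End.mul_apply, an_apply, cr_apply, Pi.add_apply,
      hij, Ne.symm hij, if_false, LinearMap.zero_apply, Pi.zero_apply, Finset.mem_insert,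
      Finset.mem_erase, false_or]
    by_cases hi : i ∈ S
    swap
    · simp [hi]
    by_cases hj : j ∈ S
    · simp [hj, Ne.symm hij]
    simp only [hi, hj, and_false, if_true, if_false, sg_erase i j S hi, sg_insert j i S hj,
      Finset.erase_insert_of_ne (Ne.symm hij)]
    rcases lt_or_gt_of_ne hij with h | h
    · simp only [h, not_lt_of_gt h, if_true, if_false]; ring
    · simp only [h, not_lt_of_gt h, if_true, if_false]; ring

lemma sum_alt {ι M : Type*} [Fintype ι] [AddCommGroup M] (f : ι → ι → M)
    (h0 : ∀ i, f i i = 0) (h : ∀ i j, f i j + f j i = 0) : ∑ i, ∑ j, f i j = 0 := by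
  classical
  rw [← Fintype.sum_prod_type']
  refine Finset.sum_involution (fun p _ => p.swap) ?_ ?_ ?_ ?_
  · intro p _; exact h _ _
  · rintro ⟨i, j⟩ _ hp heq
    obtain rfl : j = i := congrArg Prod.fst heq
    exact hp (h0 _)
  · simp
  · simp

/-- contraction with a vector -/
def anv (R : Type*) [CommRing R] (m : ℕ) :
    (Fin m → R) →ₗ[R] Module.End R (Finset (Fin m) → R) :=
  Fintype.linearCombination R (an R)

lemma anv_apply (v : Fin m → R) : anv R m v = ∑ j, v j • an R j := by
  simp [anv, Fintype.linearCombination_apply]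

lemma anv_sq (v : Fin m → R) : anv R m v * anv R m v = 0 := by
  rw [anv_apply, Finset.sum_mul_sum]
  refine sum_alt _ (fun i => by simp [an_sq]) (fun i j => ?_)
  rw [smul_mul_smul_comm, smul_mul_smul_comm, mul_comm (v j), ← smul_add, an_an, smul_zero]

lemma anv_anv (v w : Fin m → R) : anv R m v * anv R m w + anv R m w * anv R m v = 0 := by
  have := anv_sq (v + w)
  rw [map_add, add_mul, mul_add, mul_add, anv_sq, anv_sq] at this
  simpa using this

/-- wedge with a vector -/
def crv (R : Type*) [CommRing R] (m : ℕ) :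
    (Fin m → R) →ₗ[R] Module.End R (Finset (Fin m) → R) :=
  Fintype.linearCombination R (cr R)

lemma crv_apply (v : Fin m → R) : crv R m v = ∑ j, v j • cr R j := by
  simp [crv, Fintype.linearCombination_apply]

lemma crv_anv (v w : Fin m → R) :
    crv R m v * anv R m w + anv R m w * crv R m v = (v ⬝ᵥ w) • 1 := by
  rw [anv_apply, crv_apply, Finset.sum_mul_sum, Finset.sum_mul_sum]
  rw [Finset.sum_comm, ← Finset.sum_add_distrib]
  simp_rw [← Finset.sum_add_distrib, smul_mul_smul_comm]
  have : ∀ i j, (v j * w i) • (cr R j * an R i) + (w i * v j) • (an R i * cr R j)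
      = if j = i then (v j * w i) • (1 : Module.End R (Finset (Fin m) → R)) else 0 := by
    intro i j
    rw [mul_comm (w i), ← smul_add, cr_an]
    split_ifs <;> simp
  simp_rw [this]
  simp [dotProduct, Finset.sum_smul]

/-- degree `d` part -/
def deg (R : Type*) [CommRing R] (m d : ℕ) : Submodule R (Finset (Fin m) → R) where
  carrier := {z | ∀ S, S.card ≠ d → z S = 0}
  add_mem' ha hb S hS := by simp [ha S hS, hb S hS]
  zero_mem' := by intro S _; rfl
  smul_mem' r a ha S hS := by simp [ha S hS]

lemma anv_deg (v : Fin m → R) {d : ℕ} {z} (hz : z ∈ deg R m (d + 1)) :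
    anv R m v z ∈ deg R m d := by
  rw [anv_apply, LinearMap.sum_apply]
  refine Submodule.sum_mem _ fun j _ => ?_
  refine Submodule.smul_mem _ _ ?_
  intro S hS
  rw [an_apply]
  split_ifs with h
  · rfl
  · rw [hz _ (by rw [Finset.card_insert_of_notMem h]; omega), mul_zero]

lemma crv_deg (v : Fin m → R) {d : ℕ} {z} (hz : z ∈ deg R m d) :
    crv R m v z ∈ deg R m (d + 1) := by
  rw [crv_apply, LinearMap.sum_apply]
  refine Submodule.sum_mem _ fun j _ => ?_
  refine Submodule.smul_mem _ _ ?_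
  intro S hS
  rw [cr_apply]
  split_ifs with h
  · rw [hz _ (by rw [Finset.card_erase_of_mem h]; have := Finset.card_pos.2 ⟨j, h⟩; omega),
      mul_zero]
  · rfl

end Fock

end DetAux
namespace DetAux

section Minors

variable {R : Type*} [CommRing R]

lemma prod_mem_minors {s t : ℕ} {B : Type*} [Ring B] [Algebra R B]
    (A' : Matrix (Fin s) (Fin t) R) (F : (Fin s → R) →ₗ[R] B) (hF : ∀ v, F v * F v = 0)
    (φ : B →ₗ[R] R) :
    φ (List.ofFn fun i => F (fun j => A' j i)).prod ∈
      Ideal.span {d : R | ∃ g : Fin t → Fin s, Function.Injective g ∧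
        d = (A'.submatrix g _root_.id).det} := by
  have h1 : (List.ofFn fun i => F (fun j => A' j i)).prod =
      ExteriorAlgebra.lift R ⟨F, hF⟩
        ((exteriorPower.ιMulti R t (fun i j => A' j i) : ⋀[R]^t (Fin s → R)) :
          ExteriorAlgebra R (Fin s → R)) := by
    rw [exteriorPower.ιMulti_apply_coe, ExteriorAlgebra.ιMulti_apply, map_list_prod,
      List.map_ofFn]
    congr 2
    ext i
    simp
  rw [h1]
  set b := (Pi.basisFun R (Fin s)).exteriorPower t
  rw [← b.sum_repr (exteriorPower.ιMulti R t (fun i j => A' j i))]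
  rw [Submodule.coe_sum, map_sum, map_sum]
  refine Ideal.sum_mem _ fun σ _ => ?_
  rw [Submodule.coe_smul, map_smul, map_smul, smul_eq_mul]
  refine Ideal.mul_mem_right _ _ (Ideal.subset_span ?_)
  refine ⟨fun j => Set.powersetCard.ofFinEmbEquiv.symm σ j, 
    (Set.powersetCard.ofFinEmbEquiv.symm σ).injective, ?_⟩
  rw [exteriorPower.basis_repr_apply, exteriorPower.ιMultiDual_apply_ιMulti,
    ← Matrix.det_transpose]
  congr 1

lemma eps_last_mem {s t : ℕ} (A : Matrix (Fin (s + 1)) (Fin t) R)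
    (u : Finset (Fin (s + 1)) → R) :
    (List.ofFn fun i => anv R (s + 1) (fun j => A j i)).prod u {Fin.last s} ∈
      Ideal.span {d : R | ∃ g : Fin t → Fin s, Function.Injective g ∧
        d = ((A.submatrix Fin.castSucc _root_.id).submatrix g _root_.id).det} := by
  let N : Submodule R (Finset (Fin (s + 1)) → R) :=
    { carrier := {z | ∀ S, Fin.last s ∈ S → z S = 0}
      add_mem' := fun ha hb S hS => by simp [ha S hS, hb S hS]
      zero_mem' := fun S _ => rfl
      smul_mem' := fun r a ha S hS => by simp [ha S hS] }
  have hN : ∀ v, ∀ z ∈ N, anv R (s + 1) v z ∈ N := by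
    intro v z hz
    rw [anv_apply, LinearMap.sum_apply]
    refine Submodule.sum_mem _ fun j _ => ?_
    refine Submodule.smul_mem _ _ ?_
    intro S hS
    rw [an_apply, hz _ (Finset.mem_insert_of_mem hS)]
    simp
  let E : (Fin s → R) →ₗ[R] (Fin (s + 1) → R) :=
    { toFun := fun v => Fin.snoc v 0
      map_add' := fun v w => by
        ext j; refine Fin.lastCases ?_ (fun j => ?_) j <;> simp
      map_smul' := fun r w => by
        ext j; refine Fin.lastCases ?_ (fun j => ?_) j <;> simp }
  have hE : ∀ v : Fin (s + 1) → R, ∀ z,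
      anv R (s + 1) v z - anv R (s + 1) (E fun j => v j.castSucc) z ∈ N := by
    intro v z S hS
    rw [anv_apply, anv_apply, Fin.sum_univ_castSucc, Fin.sum_univ_castSucc]
    simp [E, an_apply, hS]
  have key : ∀ L : List (Fin t),
      (L.map fun i => anv R (s + 1) (fun j => A j i)).prod u -
      (L.map fun i => anv R (s + 1) (E fun j => A j.castSucc i)).prod u ∈ N := by
    intro L
    induction L with
    | nil => simp
    | cons i L ih =>
      simp only [List.map_cons, List.prod_cons, Module.End.mul_apply]
      have h1 := hN (fun j => A j i) _ ih
      have h2 := hE (fun j => A j i)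
        ((L.map fun i => anv R (s + 1) (E fun j => A j.castSucc i)).prod u)
      rw [map_sub] at h1
      have := N.add_mem h1 h2
      simpa using this
  have h1 := key (List.finRange t) {Fin.last s} (by simp)
  rw [← List.ofFn_eq_map, ← List.ofFn_eq_map, Pi.sub_apply, sub_eq_zero] at h1
  rw [h1]
  have := prod_mem_minors (R := R) (A.submatrix Fin.castSucc _root_.id)
    ((anv R (s + 1)).comp E) (fun v => anv_sq _)
    ((LinearMap.proj {Fin.last s}).comp (LinearMap.applyₗ u))
  simpa using this

end Minors

end DetAux
namespace DetAux

section Cplx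

variable {R : Type*} [CommRing R] {m t : ℕ}

/-- pointwise in ideal -/
def pj (m : ℕ) (J : Ideal R) : Submodule R (Finset (Fin m) → R) where
  carrier := {z | ∀ S, z S ∈ J}
  add_mem' ha hb S := J.add_mem (ha S) (hb S)
  zero_mem' S := J.zero_mem
  smul_mem' r a ha S := J.mul_mem_left r (ha S)

lemma pj_end (J : Ideal R) (f : Module.End R (Finset (Fin m) → R)) {z} (hz : z ∈ pj m J) :
    f z ∈ pj m J := by
  intro S
  rw [LinearMap.pi_apply_eq_sum_univ f z, Finset.sum_apply]
  exact Ideal.sum_mem _ fun T _ => J.mul_mem_right _ (hz T)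

/-- pointwise in ideal -/
def pH (m t : ℕ) (J : Ideal R) : Submodule R ((Fin t → ℕ) → Finset (Fin m) → R) where
  carrier := {z | ∀ α, z α ∈ pj m J}
  add_mem' ha hb S := Submodule.add_mem _ (ha S) (hb S)
  zero_mem' S := Submodule.zero_mem _
  smul_mem' r a ha S := Submodule.smul_mem _ r (ha S)

/-- differential -/
def dd (a : Fin t → Module.End R (Finset (Fin m) → R)) :
    Module.End R ((Fin t → ℕ) → Finset (Fin m) → R) where
  toFun z α := ∑ i, a i (z (α + Pi.single i 1))
  map_add' x y := by ext1 α; simp [Finset.sum_add_distrib]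
  map_smul' r x := by ext1 α; simp [Finset.smul_sum]

lemma dd_apply (a : Fin t → Module.End R (Finset (Fin m) → R)) (z α) :
    dd a z α = ∑ i, a i (z (α + Pi.single i 1)) := rfl

lemma dd_pH (a : Fin t → Module.End R (Finset (Fin m) → R)) {J : Ideal R} {z}
    (hz : z ∈ pH m t J) : dd a z ∈ pH m t J := by
  intro α
  rw [dd_apply]
  exact Submodule.sum_mem _ fun i _ => pj_end J _ (hz _)

lemma dd_dd (a : Fin t → Module.End R (Finset (Fin m) → R)) (h0 : ∀ i, a i * a i = 0)
    (h : ∀ i j, a i * a j + a j * a i = 0) (z) : dd a (dd a z) = 0 := by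
  ext1 α
  simp only [dd_apply, map_sum, Pi.zero_apply]
  refine sum_alt _ (fun i => ?_) (fun i j => ?_)
  · rw [← Module.End.mul_apply, h0]; rfl
  · rw [add_right_comm α (Pi.single j 1), ← Module.End.mul_apply, ← Module.End.mul_apply,
      ← LinearMap.add_apply, h]; rfl

/-- homotopy -/
def hs (w : Module.End R (Finset (Fin m) → R)) (i : Fin t) :
    Module.End R ((Fin t → ℕ) → Finset (Fin m) → R) where
  toFun z α := if α i = 0 then 0 else w (z (α - Pi.single i 1))
  map_add' x y := by ext1 α; simp only [Pi.add_apply]; split_ifs <;> simp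
  map_smul' r x := by
    ext1 α; simp only [Pi.smul_apply, RingHom.id_apply]; split_ifs <;> simp

lemma hs_apply (w : Module.End R (Finset (Fin m) → R)) (i : Fin t) (z α) :
    hs w i z α = if α i = 0 then 0 else w (z (α - Pi.single i 1)) := rfl

lemma hs_pH (w : Module.End R (Finset (Fin m) → R)) (i : Fin t) {J : Ideal R} {z}
    (hz : z ∈ pH m t J) : hs w i z ∈ pH m t J := by
  intro α
  rw [hs_apply]
  split_ifs
  · exact Submodule.zero_mem _
  · exact pj_end J _ (hz _)

/-- projector -/
def tt (f : Module.End R (Finset (Fin m) → R)) (i : Fin t) :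
    Module.End R ((Fin t → ℕ) → Finset (Fin m) → R) where
  toFun z α := if α i = 0 then f (z α) else 0
  map_add' x y := by ext1 α; simp only [Pi.add_apply]; split_ifs <;> simp
  map_smul' r x := by
    ext1 α; simp only [Pi.smul_apply, RingHom.id_apply]; split_ifs <;> simp

lemma tt_apply (f : Module.End R (Finset (Fin m) → R)) (i : Fin t) (z α) :
    tt f i z α = if α i = 0 then f (z α) else 0 := rfl

lemma tt_pH (f : Module.End R (Finset (Fin m) → R)) (i : Fin t) {J : Ideal R} {z}
    (hz : z ∈ pH m t J) : tt f i z ∈ pH m t J := by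
  intro α
  rw [tt_apply]
  split_ifs
  · exact pj_end J _ (hz _)
  · exact Submodule.zero_mem _

/-- homogeneous parts -/
def hh (R : Type*) [CommRing R] (m t k : ℕ) :
    Submodule R ((Fin t → ℕ) → Finset (Fin m) → R) where
  carrier := {z | ∀ α, z α ∈ deg R m (t + 1 + k) ∧ (∑ i, α i ≠ k → z α = 0)}
  add_mem' ha hb α := ⟨Submodule.add_mem _ (ha α).1 (hb α).1, fun h => by
    simp [(ha α).2 h, (hb α).2 h]⟩
  zero_mem' α := ⟨Submodule.zero_mem _, fun _ => rfl⟩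
  smul_mem' r a ha α := ⟨Submodule.smul_mem _ r (ha α).1, fun h => by simp [(ha α).2 h]⟩

lemma sum_add_single (α : Fin t → ℕ) (i : Fin t) :
    ∑ l, (α + Pi.single i 1 : Fin t → ℕ) l = ∑ l, α l + 1 := by
  simp [Finset.sum_add_distrib]

lemma dd_hh (a : Fin t → Module.End R (Finset (Fin m) → R))
    (ha : ∀ i d z, z ∈ deg R m (d + 1) → a i z ∈ deg R m d) {k z} (hz : z ∈ hh R m t (k + 1)) :
    dd a z ∈ hh R m t k := by
  intro α
  rw [dd_apply]
  refine ⟨Submodule.sum_mem _ fun i _ => ha _ _ _ (hz _).1, fun h => ?_⟩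
  refine Finset.sum_eq_zero fun i _ => ?_
  rw [(hz _).2 (by rw [sum_add_single]; omega), map_zero]

lemma dd_hh_zero (a : Fin t → Module.End R (Finset (Fin m) → R)) {z} (hz : z ∈ hh R m t 0) :
    dd a z = 0 := by
  ext1 α
  rw [dd_apply]
  refine Finset.sum_eq_zero fun i _ => ?_
  rw [(hz _).2 (by rw [sum_add_single]; omega), map_zero]

lemma sub_add_single (α : Fin t → ℕ) (i : Fin t) (h : α i ≠ 0) :
    α - Pi.single i 1 + Pi.single i 1 = α := by
  ext j
  by_cases hj : j = i
  · subst hj; simp; omega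
  · simp [hj]

lemma hs_hh (w : Module.End R (Finset (Fin m) → R)) (i : Fin t)
    (hw : ∀ d z, z ∈ deg R m d → w z ∈ deg R m (d + 1)) {k z} (hz : z ∈ hh R m t k) :
    hs w i z ∈ hh R m t (k + 1) := by
  intro α
  rw [hs_apply]
  split_ifs with h0
  · exact ⟨Submodule.zero_mem _, fun _ => rfl⟩
  · refine ⟨hw _ _ (hz _).1, fun h => ?_⟩
    rw [(hz _).2, map_zero]
    intro h1
    have := sum_add_single (α - Pi.single i 1) i
    rw [sub_add_single α i h0] at this
    omega

lemma tt_hh (f : Module.End R (Finset (Fin m) → R)) (i : Fin t)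
    (hf : ∀ d z, z ∈ deg R m (d + 1) → f z ∈ deg R m (d + 1)) {k z} (hz : z ∈ hh R m t k) :
    tt f i z ∈ hh R m t k := by
  intro α
  rw [tt_apply]
  split_ifs with h0
  · refine ⟨?_, fun h => by rw [(hz _).2 h, map_zero]⟩
    have := (hz α).1
    rw [add_right_comm] at this ⊢
    exact hf _ _ this
  · exact ⟨Submodule.zero_mem _, fun _ => rfl⟩

lemma homotopy (a w : Fin t → Module.End R (Finset (Fin m) → R)) (Δ : R)
    (hwa : ∀ i l, w i * a l + a l * w i = if i = l then Δ • 1 else 0) (i : Fin t) (z) :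
    dd a (hs (w i) i z) + hs (w i) i (dd a z) = Δ • z - tt (w i * a i) i z := by
  have h1 : ∀ l y, w i (a l y) + a l (w i y) = if i = l then Δ • y else 0 := by
    intro l y
    have := LinearMap.congr_fun (hwa i l) y
    rw [LinearMap.add_apply, Module.End.mul_apply, Module.End.mul_apply] at this
    rw [this]; split_ifs <;> simp
  ext1 α
  simp only [Pi.add_apply, Pi.sub_apply, Pi.smul_apply, dd_apply, hs_apply, tt_apply,
    Module.End.mul_apply]
  by_cases h0 : α i = 0
  · simp only [h0, if_true, add_zero]
    rw [Finset.sum_eq_single i]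
    · simp only [Pi.add_apply, h0, Pi.single_eq_same, zero_add, one_ne_zero, if_false,
        add_tsub_cancel_right]
      rw [← (h1 i (z α)).trans (if_pos rfl)]
      abel
    · intro l _ hl
      simp [h0, Pi.single_apply, Ne.symm hl]
    · simp
  · simp only [h0, if_false, sub_zero, map_sum]
    rw [← Finset.sum_add_distrib, Finset.sum_eq_single i]
    · rw [← (h1 i (z α)).trans (if_pos rfl), sub_add_single α i h0]
      simp [add_comm]
    · intro l _ hl
      have h2 : α + Pi.single l 1 - Pi.single i 1 = α - Pi.single i 1 + Pi.single l 1 := by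
        ext j
        by_cases hj : j = i
        · subst hj; simp [Ne.symm hl]
        · simp [hj]
      rw [if_neg (by simp [h0]), h2, add_comm, h1, if_neg (Ne.symm hl)]
    · simp

lemma tt_dd (a w : Fin t → Module.End R (Finset (Fin m) → R)) (Δ : R)
    (h0 : ∀ i, a i * a i = 0)
    (h : ∀ i j, a i * a j + a j * a i = 0)
    (hwa : ∀ i l, w i * a l + a l * w i = if i = l then Δ • 1 else 0) (i : Fin t) (z) :
    dd a (tt (w i * a i) i z) = tt (w i * a i) i (dd a z) := by
  have h1 := congrArg (dd a) (homotopy a w Δ hwa i z)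
  have h2 := homotopy a w Δ hwa i (dd a z)
  rw [map_add, dd_dd a h0 h, zero_add, map_sub, map_smul] at h1
  rw [dd_dd a h0 h, map_zero, add_zero] at h2
  rw [h1] at h2
  exact sub_right_injective h2

/-- list of projectors -/
def tl (a w : Fin t → Module.End R (Finset (Fin m) → R)) :
    List (Fin t) → ((Fin t → ℕ) → Finset (Fin m) → R) → ((Fin t → ℕ) → Finset (Fin m) → R)
  | [], z => z
  | i :: L, z => tt (w i * a i) i (tl a w L z)

lemma anti {B : Type*} [Ring B] [Algebra R B] (x y : B) (h : x * y + y * x = 0) :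
    y * x = (-1 : R) • (x * y) := by
  rw [neg_smul, one_smul]
  exact eq_neg_of_add_eq_zero_right h

lemma prod_wa (a w : Fin t → Module.End R (Finset (Fin m) → R)) (Δ : R)
    (hwa : ∀ i l, w i * a l + a l * w i = if i = l then Δ • 1 else 0) (L : List (Fin t))
    (hL : L.Nodup) :
    ∃ W, (L.map fun i => w i * a i).prod = W * (L.map a).prod ∧
      ∀ i ∉ L, ∃ u : R, a i * W = u • (W * a i) := by
  induction L with
  | nil => exact ⟨1, by simp, fun i _ => ⟨1, by simp⟩⟩
  | cons i L ih =>
    rw [List.nodup_cons] at hL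
    obtain ⟨W, hW, hc⟩ := ih hL.2
    obtain ⟨u, hu⟩ := hc i hL.1
    refine ⟨u • (w i * W), ?_, ?_⟩
    · simp only [List.map_cons, List.prod_cons]
      rw [hW, mul_assoc, ← mul_assoc (a i), hu, smul_mul_assoc, smul_mul_assoc, mul_smul_comm]
      simp only [mul_assoc]
    · intro l hl
      rw [List.mem_cons, not_or] at hl
      obtain ⟨u', hu'⟩ := hc l hl.2
      refine ⟨-u', ?_⟩
      have h2 : a l * w i = (-1 : R) • (w i * a l) := by
        have := hwa i l
        rw [if_neg (Ne.symm hl.1)] at this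
        exact anti _ _ this
      rw [mul_smul_comm, ← mul_assoc, h2, smul_mul_assoc, mul_assoc, hu', mul_smul_comm,
        smul_mul_assoc, smul_smul, smul_smul, smul_smul, mul_assoc]
      congr 1
      ring

lemma prod_a_mul (a : Fin t → Module.End R (Finset (Fin m) → R)) (h0 : ∀ i, a i * a i = 0)
    (h : ∀ i j, a i * a j + a j * a i = 0) (L : List (Fin t)) (i : Fin t) :
    (∃ u : R, (L.map a).prod * a i = u • (a i * (L.map a).prod)) ∧
      (i ∈ L → (L.map a).prod * a i = 0) := by
  induction L with
  | nil => exact ⟨⟨1, by simp⟩, by simp⟩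
  | cons j L ih =>
    obtain ⟨⟨u, hu⟩, h1⟩ := ih
    simp only [List.map_cons, List.prod_cons]
    constructor
    · refine ⟨-u, ?_⟩
      rw [mul_assoc, hu, mul_smul_comm, ← mul_assoc, ← mul_assoc,
        anti (R := R) _ _ (h i j), smul_mul_assoc, smul_smul, mul_neg_one]
    · intro hi
      rcases List.mem_cons.1 hi with rfl | hi
      · rw [mul_assoc, hu, mul_smul_comm, ← mul_assoc, h0, zero_mul, smul_zero]
      · rw [mul_assoc, h1 hi, mul_zero]

/-- cycles modulo `J` -/
def Cyc (a : Fin t → Module.End R (Finset (Fin m) → R)) (J : Ideal R) (k : ℕ)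
    (z : (Fin t → ℕ) → Finset (Fin m) → R) : Prop :=
  z ∈ hh R m t k ∧ dd a z ∈ pH m t J ∧
    (k = 0 → ((List.finRange t).map a).prod (z 0) ∈ pj m J)

/-- first property -/
def K2 (a : Fin t → Module.End R (Finset (Fin m) → R)) (x : R) : Prop :=
  ∀ J k z, Cyc a J k z → ∃ z' ∈ hh R m t (k + 1), x • z - dd a z' ∈ pH m t J

/-- second property -/
def K1 (a : Fin t → Module.End R (Finset (Fin m) → R)) (x : R) : Prop :=
  ∀ y ∈ deg R m 1, (∀ i, a i y = 0) →
    ∃ u ∈ deg R m (t + 1), x • y = ((List.finRange t).map a).prod u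

lemma tl_zero (a w : Fin t → Module.End R (Finset (Fin m) → R)) (L : List (Fin t)) (z) :
    tl a w L z 0 = (L.map fun i => w i * a i).prod (z 0) := by
  induction L with
  | nil => simp [tl]
  | cons i L ih => simp [tl, tt_apply, ih]

lemma tl_ne (a w : Fin t → Module.End R (Finset (Fin m) → R)) (L : List (Fin t)) (z)
    (α : Fin t → ℕ) (i : Fin t) (hi : i ∈ L) (h : α i ≠ 0) : tl a w L z α = 0 := by
  induction L with
  | nil => simp at hi
  | cons j L ih =>
    rw [tl, tt_apply]
    rcases List.mem_cons.1 hi with rfl | hi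
    · rw [if_neg h]
    · rw [ih hi]; simp

lemma K2_pow (a w : Fin t → Module.End R (Finset (Fin m) → R)) (Δ : R)
    (h0 : ∀ i, a i * a i = 0)
    (h : ∀ i j, a i * a j + a j * a i = 0)
    (hwa : ∀ i l, w i * a l + a l * w i = if i = l then Δ • 1 else 0)
    (ha : ∀ i d z, z ∈ deg R m (d + 1) → a i z ∈ deg R m d)
    (hw : ∀ i d z, z ∈ deg R m d → w i z ∈ deg R m (d + 1)) :
    K2 a (Δ ^ t) := by
  intro J k z ⟨hzk, hzJ, hz0⟩
  have key : ∀ L : List (Fin t), tl a w L z ∈ hh R m t k ∧ dd a (tl a w L z) ∈ pH m t J ∧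
      ∃ z' ∈ hh R m t (k + 1), Δ ^ L.length • z - tl a w L z - dd a z' ∈ pH m t J := by
    intro L
    induction L with
    | nil => exact ⟨hzk, hzJ, 0, Submodule.zero_mem _, by simp [tl]⟩
    | cons i L ih =>
      obtain ⟨ih1, ih2, z', hz', ih3⟩ := ih
      refine ⟨tt_hh (w i * a i) i (fun d z hz => hw i d (a i z) (ha i d z hz)) ih1, ?_,
        Δ • z' + hs (w i) i (tl a w L z), Submodule.add_mem _ (Submodule.smul_mem _ _ hz')
          (hs_hh _ _ (hw i) ih1), ?_⟩
      · rw [tl, tt_dd a w Δ h0 h hwa]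
        exact tt_pH _ _ ih2
      · have h1 := homotopy a w Δ hwa i (tl a w L z)
        have h2 := Submodule.add_mem _ (Submodule.smul_mem _ Δ ih3) (hs_pH (w i) i ih2)
        convert h2 using 1
        rw [tl, List.length_cons, map_add, map_smul, smul_sub, smul_sub, smul_smul, ← pow_succ']
        rw [eq_sub_iff_add_eq] at h1
        rw [← h1]
        abel
  obtain ⟨-, -, z', hz', h3⟩ := key (List.finRange t)
  refine ⟨z', hz', ?_⟩
  rw [List.length_finRange] at h3
  have h4 : tl a w (List.finRange t) z ∈ pH m t J := by
    intro α
    by_cases hα : α = 0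
    · subst hα
      rw [tl_zero]
      by_cases hk : k = 0
      · obtain ⟨W, hW, -⟩ := prod_wa a w Δ hwa (List.finRange t) (List.nodup_finRange t)
        rw [hW, Module.End.mul_apply]
        exact pj_end J _ (hz0 hk)
      · rw [(hzk 0).2 (by simp; omega), map_zero]
        exact Submodule.zero_mem _
    · obtain ⟨i, hi⟩ := Function.ne_iff.1 hα
      rw [tl_ne a w _ z α i (List.mem_finRange i) hi]
      exact Submodule.zero_mem _
  have := Submodule.add_mem _ h3 h4
  convert this using 1
  abel

lemma K1_pow (a w : Fin t → Module.End R (Finset (Fin m) → R)) (Δ : R)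
    (hwa : ∀ i l, w i * a l + a l * w i = if i = l then Δ • 1 else 0)
    (hw : ∀ i d z, z ∈ deg R m d → w i z ∈ deg R m (d + 1)) :
    K1 a (Δ ^ t) := by
  have key : ∀ L : List (Fin t), L.Nodup → ∀ d, ∀ y ∈ deg R m d, (∀ i ∈ L, a i y = 0) →
      ∃ u ∈ deg R m (d + L.length), Δ ^ L.length • y = (L.map a).prod u := by
    intro L
    induction L with
    | nil => intro _ d y hy _; exact ⟨y, hy, by simp⟩
    | cons i L ih =>
      intro hL d y hy hay
      rw [List.nodup_cons] at hL
      have h1 : ∀ l y, w i (a l y) + a l (w i y) = if i = l then Δ • y else 0 := by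
        intro l y
        have := LinearMap.congr_fun (hwa i l) y
        rw [LinearMap.add_apply, Module.End.mul_apply, Module.End.mul_apply] at this
        rw [this]; split_ifs <;> simp
      obtain ⟨u, hu, huy⟩ := ih hL.2 (d + 1) (w i y) (hw _ _ _ hy) (by
        intro l hl
        have := h1 l y
        rw [hay l (List.mem_cons_of_mem _ hl), map_zero, zero_add, if_neg] at this
        · exact this
        · rintro rfl; exact hL.1 hl)
      refine ⟨u, ?_, ?_⟩
      · rw [List.length_cons]; convert hu using 1; rw [add_assoc, add_comm 1]
      · rw [List.map_cons, List.prod_cons, Module.End.mul_apply, ← huy, map_smul]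
        have := h1 i y
        rw [hay i (List.mem_cons_self), map_zero, zero_add, if_pos rfl] at this
        rw [this, smul_smul, List.length_cons, pow_succ]
  intro y hy hay
  obtain ⟨u, hu, h⟩ := key (List.finRange t) (List.nodup_finRange t) 1 y hy (fun i _ => hay i)
  rw [List.length_finRange] at hu h
  exact ⟨u, by rwa [add_comm], h⟩

/-- the ideal of good elements -/
def kI (a : Fin t → Module.End R (Finset (Fin m) → R)) : Ideal R where
  carrier := {x | K1 a x ∧ K2 a x}
  zero_mem' := ⟨fun y _ _ => ⟨0, Submodule.zero_mem _, by simp⟩,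
    fun J k z _ => ⟨0, Submodule.zero_mem _, by simp⟩⟩
  add_mem' := by
    rintro x x' ⟨h1, h2⟩ ⟨h1', h2'⟩
    refine ⟨fun y hy hay => ?_, fun J k z hz => ?_⟩
    · obtain ⟨u, hu, e⟩ := h1 y hy hay
      obtain ⟨u', hu', e'⟩ := h1' y hy hay
      exact ⟨u + u', Submodule.add_mem _ hu hu', by rw [add_smul, e, e', map_add]⟩
    · obtain ⟨u, hu, e⟩ := h2 J k z hz
      obtain ⟨u', hu', e'⟩ := h2' J k z hz
      refine ⟨u + u', Submodule.add_mem _ hu hu', ?_⟩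
      convert Submodule.add_mem _ e e' using 1
      rw [add_smul, map_add]; abel
  smul_mem' := by
    rintro r x ⟨h1, h2⟩
    refine ⟨fun y hy hay => ?_, fun J k z hz => ?_⟩
    · obtain ⟨u, hu, e⟩ := h1 y hy hay
      exact ⟨r • u, Submodule.smul_mem _ _ hu, by rw [smul_assoc, e, map_smul]⟩
    · obtain ⟨u, hu, e⟩ := h2 J k z hz
      refine ⟨r • u, Submodule.smul_mem _ _ hu, ?_⟩
      convert Submodule.smul_mem _ r e using 1
      rw [smul_assoc, map_smul, smul_sub]

end Cplx

end DetAux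
namespace DetAux

section Descent

variable {R : Type*} [CommRing R] {m t : ℕ}

/-- ideal of first elements -/
def jj (x : ℕ → R) (k : ℕ) : Ideal R := Ideal.span (x '' Set.Iio k)

lemma jj_succ (x : ℕ → R) (k : ℕ) {r : R} (hr : r ∈ jj x (k + 1)) :
    ∃ u, r - x k * u ∈ jj x k := by
  have : x '' Set.Iio (k + 1) = insert (x k) (x '' Set.Iio k) := by
    rw [← Set.image_insert_eq]
    congr 1
    ext j; simp [le_iff_eq_or_lt]
  rw [jj, this, Ideal.mem_span_insert] at hr
  obtain ⟨u, v, hv, rfl⟩ := hr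
  exact ⟨u, by rw [mul_comm u, add_sub_cancel_left]; exact hv⟩

lemma jj_mono (x : ℕ → R) {k l : ℕ} (h : k ≤ l) : jj x k ≤ jj x l :=
  Ideal.span_mono (Set.image_mono (Set.Iio_subset_Iio h))

lemma x_mem_jj (x : ℕ → R) {k : ℕ} : x k ∈ jj x (k + 1) :=
  Ideal.subset_span ⟨k, by simp, rfl⟩

lemma lift_jj (x : ℕ → R) (n k : ℕ) {r} (hr : r ∈ hh R m t k) (hJ : r ∈ pH m t (jj x (n + 1))) :
    ∃ u ∈ hh R m t k, r - x n • u ∈ pH m t (jj x n) := by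
  classical
  have h1 : ∀ α S, ∃ u, (r α S = 0 → u = 0) ∧ r α S - x n * u ∈ jj x n := by
    intro α S
    by_cases h : r α S = 0
    · exact ⟨0, fun _ => rfl, by simp [h]⟩
    · obtain ⟨u, hu⟩ := jj_succ x n (hJ α S)
      exact ⟨u, fun h' => absurd h' h, hu⟩
  choose u hu0 hu using h1
  refine ⟨u, fun α => ⟨fun S hS => hu0 _ _ ((hr α).1 S hS), fun h => ?_⟩, fun α S => hu α S⟩
  ext S
  exact hu0 _ _ (by rw [(hr α).2 h]; rfl)

lemma pH_mono {J J' : Ideal R} (h : J ≤ J') : pH m t J ≤ pH m t J' := fun _ hz α S => h (hz α S)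

lemma hh_eq_zero {k : ℕ} (hk : m < t + 1 + k) {z} (hz : z ∈ hh R m t k) : z = 0 := by
  ext α S
  refine (hz α).1 S ?_
  have := Finset.card_le_univ S
  rw [Fintype.card_fin] at this
  omega

lemma descent
    (a : Fin t → Module.End R (Finset (Fin m) → R))
    (h0 : ∀ i, a i * a i = 0)
    (h : ∀ i j, a i * a j + a j * a i = 0)
    (ha : ∀ i d z, z ∈ deg R m (d + 1) → a i z ∈ deg R m d)
    (x : ℕ → R) (c : ℕ) (hx : ∀ j < c, x j ∈ kI a)
    (hreg : ∀ j < c, ∀ r, x j * r ∈ jj x j → r ∈ jj x j) (hm : m < t + c)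
    (j : ℕ) : ∀ k, k + j + 1 = c → ∀ z, Cyc a (jj x (k + 1)) k z →
    ∃ w ∈ hh R m t (k + 1), z - dd a w ∈ pH m t (jj x (k + 1)) := by
  induction j with
  | zero =>
    intro k hk z hz
    refine ⟨0, Submodule.zero_mem _, ?_⟩
    rw [hh_eq_zero (by omega) hz.1, map_zero, sub_zero]
    exact Submodule.zero_mem _
  | succ j ih =>
    intro k hk z hz
    obtain ⟨z', hz', h1⟩ := (hx (k + 1) (by omega)).2 _ _ _ hz
    have hcyc : Cyc a (jj x (k + 1 + 1)) (k + 1) z' := by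
      refine ⟨hz', ?_, by omega⟩
      have h2 := pH_mono (m := m) (t := t) (jj_mono x (Nat.le_succ (k + 1))) h1
      have h3 : x (k + 1) • z ∈ pH m t (jj x (k + 1 + 1)) :=
        fun α S => Ideal.mul_mem_right _ _ (x_mem_jj x)
      have := Submodule.sub_mem _ h3 h2
      rwa [sub_sub_cancel] at this
    obtain ⟨w', hw', h2⟩ := ih (k + 1) (by omega) z' hcyc
    obtain ⟨u, hu, h3⟩ := lift_jj x (k + 1) (k + 1) (Submodule.sub_mem _ hz' (dd_hh a ha hw')) h2
    refine ⟨u, hu, ?_⟩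
    have h4 := dd_pH a h3
    rw [map_sub, map_sub, dd_dd a h0 h, sub_zero, map_smul] at h4
    have h5 := Submodule.add_mem _ h1 h4
    have h6 : x (k + 1) • (z - dd a u) ∈ pH m t (jj x (k + 1)) := by
      convert h5 using 1
      rw [smul_sub]; abel
    intro α S
    exact hreg (k + 1) (by omega) _ (h6 α S)

lemma exact_main
    (a : Fin t → Module.End R (Finset (Fin m) → R))
    (h0 : ∀ i, a i * a i = 0)
    (h : ∀ i j, a i * a j + a j * a i = 0)
    (ha : ∀ i d z, z ∈ deg R m (d + 1) → a i z ∈ deg R m d)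
    (x : ℕ → R) (c : ℕ) (hx : ∀ j < c, x j ∈ kI a)
    (hreg : ∀ j < c, ∀ r, x j * r ∈ jj x j → r ∈ jj x j) (hm : m < t + c)
    (hc : 1 ≤ c) (y) (hy : y ∈ deg R m 1) (hay : ∀ i, a i y = 0) :
    ∃ u, y = ((List.finRange t).map a).prod u := by
  obtain ⟨v, hv, hvy⟩ := (hx 0 (by omega)).1 y hy hay
  set ε := ((List.finRange t).map a).prod with hε
  let z : (Fin t → ℕ) → Finset (Fin m) → R := fun α => if α = 0 then v else 0
  have hz : z ∈ hh R m t 0 := by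
    intro α
    by_cases hα : α = 0
    · simp only [z, hα, if_true]
      exact ⟨hv, fun h => by simp at h⟩
    · simp only [z, hα, if_false]
      exact ⟨Submodule.zero_mem _, fun _ => trivial⟩
  have hcyc : Cyc a (jj x (0 + 1)) 0 z := by
    refine ⟨hz, ?_, fun _ => ?_⟩
    · rw [dd_hh_zero a hz]; exact Submodule.zero_mem _
    · simp only [z, if_true]
      rw [← hε, ← hvy]
      exact fun S => Ideal.mul_mem_right _ _ (x_mem_jj x)
  obtain ⟨w', hw', h2⟩ := descent a h0 h ha x c hx hreg hm (c - 1) 0 (by omega) z hcyc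
  obtain ⟨u, hu, h3⟩ := lift_jj x 0 0 (Submodule.sub_mem _ hz (dd_hh a ha hw')) h2
  refine ⟨u 0, ?_⟩
  have h4 := pj_end (jj x 0) ε (h3 0)
  have h5 : ε (dd a w' 0) = 0 := by
    rw [dd_apply, map_sum]
    refine Finset.sum_eq_zero fun i _ => ?_
    rw [← Module.End.mul_apply, (prod_a_mul a h0 h _ i).2 (List.mem_finRange i)]
    rfl
  have h6 : ε ((z - dd a w' - x 0 • u) 0) = x 0 • (y - ε (u 0)) := by
    simp only [Pi.sub_apply, Pi.smul_apply, map_sub, map_smul, h5, sub_zero, smul_sub, hvy]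
    simp [z]
  rw [h6] at h4
  ext S
  have h7 := hreg 0 (by omega) _ (h4 S)
  simp only [jj] at h7
  rw [← sub_eq_zero]
  simpa using h7

end Descent

end DetAux
namespace DetAux

section Final

lemma det_pow_mem_kI {R : Type*} [CommRing R] {m t : ℕ} (A : Matrix (Fin m) (Fin t) R)
    (g : Fin t → Fin m) :
    (A.submatrix g _root_.id).det ^ t ∈ kI (fun i : Fin t => anv R m (fun j => A j i)) := by
  classical
  set B := A.submatrix g _root_.id with hB
  let w : Fin t → Module.End R (Finset (Fin m) → R) := fun i =>
    crv R m (fun j' => ∑ j, B.adjugate i j * if g j = j' then 1 else 0)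
  have hwa : ∀ i l, w i * anv R m (fun j => A j l) + anv R m (fun j => A j l) * w i =
      if i = l then B.det • 1 else 0 := by
    intro i l
    rw [crv_anv]
    have h1 : (fun j' => ∑ j, B.adjugate i j * if g j = j' then (1 : R) else 0) ⬝ᵥ
        (fun j => A j l) = (B.adjugate * B) i l := by
      simp only [dotProduct, Matrix.mul_apply, Finset.sum_mul]
      rw [Finset.sum_comm]
      refine Finset.sum_congr rfl fun j _ => ?_
      simp [hB]
    rw [h1, Matrix.adjugate_mul]
    by_cases hil : i = l
    · subst hil; simp
    · simp [hil]
  have hw : ∀ i d z, z ∈ deg R m d → w i z ∈ deg R m (d + 1) := fun i d z hz => crv_deg _ hz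
  exact ⟨K1_pow _ w B.det hwa hw, K2_pow _ w B.det (fun i => anv_sq _) (fun i j => anv_anv _ _) hwa
    (fun i d z hz => anv_deg _ hz) hw⟩

lemma dim_le_of_le_radical {R : Type*} [CommRing R] {I J : Ideal R} (h : I ≤ J.radical) :
    ringKrullDim (R ⧸ J) ≤ ringKrullDim (R ⧸ I) := by
  rw [ringKrullDim_quotient, ringKrullDim_quotient]
  have hsub : PrimeSpectrum.zeroLocus (J : Set R) ⊆ PrimeSpectrum.zeroLocus (I : Set R) := by
    rw [← PrimeSpectrum.zeroLocus_radical J]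
    exact PrimeSpectrum.zeroLocus_anti_mono h
  exact Order.krullDim_le_of_strictMono (Set.inclusion hsub) (fun a b hab => hab)

lemma syz_last_mem {k : Type*} [Field k] {N s t c d : ℕ}
    (A : Matrix (Fin (s + 1)) (Fin t) (MvPolynomial (Fin N) k))
    (hdim : ringKrullDim ((MvPolynomial (Fin N) k) ⧸
        Ideal.span {d : MvPolynomial (Fin N) k |
          ∃ g : Fin t → Fin (s + 1), Function.Injective g ∧
            d = (A.submatrix g _root_.id).det}) ≤ (d : ℕ))
    (hN : d + c ≤ N) (hc : 1 ≤ c) (hs : s + 1 < t + c)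
    (y : Fin (s + 1) → MvPolynomial (Fin N) k) (hy : ∀ i, ∑ j, A j i * y j = 0) :
    y (Fin.last s) ∈ Ideal.span {d : MvPolynomial (Fin N) k |
          ∃ g : Fin t → Fin s, Function.Injective g ∧
            d = ((A.submatrix Fin.castSucc _root_.id).submatrix g _root_.id).det} := by
  classical
  set a := fun i : Fin t => anv (MvPolynomial (Fin N) k) (s + 1) (fun j => A j i) with ha
  have hrad : Ideal.span {d : MvPolynomial (Fin N) k |
          ∃ g : Fin t → Fin (s + 1), Function.Injective g ∧
            d = (A.submatrix g _root_.id).det} ≤ (kI a).radical := by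
    rw [Ideal.span_le]
    rintro _ ⟨g, -, rfl⟩
    exact ⟨t, det_pow_mem_kI A g⟩
  obtain ⟨x, hx, hreg⟩ := hasReg_mvPolynomial N (kI a) c d hN
    ((dim_le_of_le_radical hrad).trans hdim)
  let Y : Finset (Fin (s + 1)) → MvPolynomial (Fin N) k :=
    fun S => ∑ j, if S = {j} then y j else 0
  have hYs : ∀ j, Y {j} = y j := by
    intro j
    simp only [Y, Finset.singleton_inj]
    simp
  have hY : Y ∈ deg (MvPolynomial (Fin N) k) (s + 1) 1 := by
    intro S hS
    refine Finset.sum_eq_zero fun j _ => if_neg ?_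
    rintro rfl
    simp at hS
  obtain ⟨u, hu⟩ := exact_main a (fun i => anv_sq _) (fun i j => anv_anv _ _)
    (fun i d z hz => anv_deg _ hz) x c hx hreg hs hc Y hY (by
      intro i
      have hd := anv_deg (fun j => A j i) hY (d := 0)
      ext1 S
      by_cases hS : S.card = 0
      · rw [Finset.card_eq_zero] at hS
        subst hS
        simp only [ha, anv_apply, LinearMap.sum_apply, LinearMap.smul_apply, Finset.sum_apply,
          Pi.smul_apply, an_apply, Finset.notMem_empty, if_false, smul_eq_mul, Pi.zero_apply]
        rw [← hy i]
        refine Finset.sum_congr rfl fun j _ => ?_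
        rw [insert_empty_eq, hYs]
        simp [sg]
      · exact hd S hS)
  rw [← hYs, hu, ← List.ofFn_eq_map]
  exact eps_last_mem A u

lemma cramer_syz {R : Type*} [CommRing R] {s t : ℕ} (A : Matrix (Fin (s + 1)) (Fin t) R)
    (g : Fin t → Fin s) :
    ∃ y : Fin (s + 1) → R, (∀ i, ∑ j, A j i * y j = 0) ∧
      y (Fin.last s) = ((A.submatrix Fin.castSucc _root_.id).submatrix g _root_.id).det := by
  classical
  set B := (A.submatrix Fin.castSucc _root_.id).submatrix g _root_.id with hB
  let v : Fin t → R := fun j => ∑ l, A (Fin.last s) l * B.adjugate l j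
  refine ⟨Fin.snoc (fun j' => ∑ j, if g j = j' then - v j else 0) B.det, ?_, by simp⟩
  intro i
  rw [Fin.sum_univ_castSucc]
  simp only [Fin.snoc_castSucc, Fin.snoc_last, Finset.mul_sum]
  rw [Finset.sum_comm]
  have h1 : ∀ j, ∑ j', A (Fin.castSucc j') i * (if g j = j' then - v j else 0) =
      - (v j * B j i) := by
    intro j
    simp [hB, mul_comm]
  simp_rw [h1]
  rw [Finset.sum_neg_distrib]
  have h2 : ∑ j, v j * B j i = A (Fin.last s) i * B.det := by
    simp only [v, Finset.sum_mul]
    rw [Finset.sum_comm]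
    have : ∀ l, ∑ j, A (Fin.last s) l * B.adjugate l j * B j i =
        A (Fin.last s) l * (if l = i then B.det else 0) := by
      intro l
      have h3 : (B.adjugate * B) l i = if l = i then B.det else 0 := by
        rw [Matrix.adjugate_mul]; simp [Matrix.one_apply]
      rw [← h3, Matrix.mul_apply, Finset.mul_sum]
      simp only [mul_assoc]
    simp_rw [this]
    simp
  rw [h2]; ring

end Final

end DetAux
namespace DetAux

lemma final_gen {R : Type*} [CommRing R] {s t : ℕ} (A : Matrix (Fin (s + 1)) (Fin t) R)
    (I : Ideal R)
    (hI : I = Ideal.span {d : R | ∃ g : Fin t → Fin s, Function.Injective g ∧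
            d = ((A.submatrix Fin.castSucc _root_.id).submatrix g _root_.id).det})
    (hsyz : ∀ y : Fin (s + 1) → R, (∀ i, ∑ j, A j i * y j = 0) → y (Fin.last s) ∈ I)
    (π : ((Fin (s + 1) → R) ⧸ LinearMap.range (Matrix.toLin' A)) →ₗ[R]
      ((Fin s → R) ⧸ LinearMap.range (Matrix.toLin' (A.submatrix Fin.castSucc _root_.id))))
    (hπ : π.comp (LinearMap.range (Matrix.toLin' A)).mkQ =
      (LinearMap.range (Matrix.toLin' (A.submatrix Fin.castSucc _root_.id))).mkQ.comp
        (LinearMap.funLeft R R Fin.castSucc)) :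
    ∃ g₂ : (((Fin (s + 1) → R) ⧸ LinearMap.range (Matrix.toLin' A)) →ₗ[R] R) →ₗ[R] I,
      Function.Injective (LinearMap.lcomp R R π) ∧
      Function.Exact (LinearMap.lcomp R R π) g₂ ∧ Function.Surjective g₂ := by
  classical
  have hπ' : ∀ v, π (Submodule.Quotient.mk v) =
      Submodule.Quotient.mk (fun j => v (Fin.castSucc j)) := fun v => LinearMap.congr_fun hπ v
  have hsurj : Function.Surjective π := by
    intro q
    obtain ⟨v, rfl⟩ := Submodule.Quotient.mk_surjective _ q
    refine ⟨Submodule.Quotient.mk (Fin.snoc v 0), ?_⟩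
    rw [hπ']; simp
  -- a functional on the cokernel evaluated on basis vectors
  have hcol : ∀ (φ : ((Fin (s + 1) → R) ⧸ LinearMap.range (Matrix.toLin' A)) →ₗ[R] R) (v),
      φ (Submodule.Quotient.mk v) =
        ∑ j, v j * φ (Submodule.Quotient.mk (Pi.single j 1)) := by
    intro φ v
    have := LinearMap.pi_apply_eq_sum_univ (φ.comp (Submodule.mkQ _)) v
    simp only [LinearMap.comp_apply, Submodule.mkQ_apply, smul_eq_mul] at this
    rw [this]
    refine Finset.sum_congr rfl fun j _ => ?_
    congr 3
    ext l
    simp [Pi.single_apply, eq_comm]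
  have hann : ∀ (φ : ((Fin (s + 1) → R) ⧸ LinearMap.range (Matrix.toLin' A)) →ₗ[R] R) (i),
      ∑ j, A j i * φ (Submodule.Quotient.mk (Pi.single j 1)) = 0 := by
    intro φ i
    rw [← hcol φ (fun j => A j i)]
    have : (Submodule.Quotient.mk (fun j => A j i) :
        (Fin (s + 1) → R) ⧸ LinearMap.range (Matrix.toLin' A)) = 0 := by
      rw [Submodule.Quotient.mk_eq_zero]
      refine ⟨Pi.single i 1, ?_⟩
      ext j
      simp
    rw [this, map_zero]
  let ev : (((Fin (s + 1) → R) ⧸ LinearMap.range (Matrix.toLin' A)) →ₗ[R] R) →ₗ[R] R :=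
    LinearMap.applyₗ (Submodule.Quotient.mk (Pi.single (Fin.last s) 1))
  have hev : ∀ φ, ev φ ∈ I := fun φ =>
    hsyz (fun j => φ (Submodule.Quotient.mk (Pi.single j 1))) (hann φ)
  refine ⟨ev.codRestrict I hev, ?_, ?_, ?_⟩
  · intro φ ψ h
    refine LinearMap.ext fun q => ?_
    obtain ⟨p, rfl⟩ := hsurj q
    exact LinearMap.congr_fun h p
  · intro φ
    rw [Subtype.ext_iff, LinearMap.codRestrict_apply, Submodule.coe_zero]
    change φ (Submodule.Quotient.mk (Pi.single (Fin.last s) 1)) = 0 ↔ _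
    constructor
    · intro h
      let ψ0 : (Fin s → R) →ₗ[R] R :=
        Fintype.linearCombination R
          (fun j : Fin s => φ (Submodule.Quotient.mk (Pi.single (Fin.castSucc j) 1)))
      have hψ0 : ∀ v, ψ0 v =
          ∑ j, v j * φ (Submodule.Quotient.mk (Pi.single (Fin.castSucc j) 1)) := by
        intro v; simp [ψ0, Fintype.linearCombination_apply]
      have hker : LinearMap.range (Matrix.toLin' (A.submatrix Fin.castSucc _root_.id)) ≤
          LinearMap.ker ψ0 := by
        rintro _ ⟨v, rfl⟩
        rw [LinearMap.mem_ker, hψ0]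
        have h1 : φ (Submodule.Quotient.mk (Matrix.toLin' A v)) = 0 := by
          rw [(Submodule.Quotient.mk_eq_zero _).2 (LinearMap.mem_range_self _ v), map_zero]
        rw [hcol, Fin.sum_univ_castSucc, h, mul_zero, add_zero] at h1
        rw [← h1]
        rfl
      refine ⟨Submodule.liftQ _ ψ0 hker, ?_⟩
      · refine LinearMap.ext fun q => ?_
        obtain ⟨v, rfl⟩ := Submodule.Quotient.mk_surjective _ q
        rw [LinearMap.lcomp_apply, hπ', hcol φ v, Fin.sum_univ_castSucc, h, mul_zero, add_zero,
          ← Submodule.mkQ_apply, Submodule.mkQ_apply, Submodule.liftQ_apply, hψ0]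
    · rintro ⟨ψ, rfl⟩
      rw [LinearMap.lcomp_apply, hπ']
      have : (fun j : Fin s => (Pi.single (Fin.last s) 1 : Fin (s + 1) → R) (Fin.castSucc j)) = 0 := by
        ext j
        simp [Pi.single_apply, Fin.castSucc_ne_last]
      rw [this, Submodule.Quotient.mk_zero, map_zero]
  · rw [← LinearMap.range_eq_top, LinearMap.range_codRestrict, Submodule.comap_subtype_eq_top]
    intro d hd
    rw [hI] at hd
    refine (Ideal.span_le (I := LinearMap.range ev)).2 ?_ hd
    rintro _ ⟨g, -, rfl⟩
    obtain ⟨y, hy, hy'⟩ := cramer_syz A g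
    have hyl : ∀ v, Fintype.linearCombination R y v = ∑ j, v j * y j := by
      intro v; simp [Fintype.linearCombination_apply]
    have hker : LinearMap.range (Matrix.toLin' A) ≤
        LinearMap.ker (Fintype.linearCombination R y) := by
      rintro _ ⟨v, rfl⟩
      rw [LinearMap.mem_ker, hyl]
      simp only [Matrix.toLin'_apply, Matrix.mulVec, dotProduct, Finset.sum_mul]
      rw [Finset.sum_comm]
      refine Finset.sum_eq_zero fun i _ => ?_
      rw [← mul_zero (v i), ← hy i, Finset.mul_sum]
      refine Finset.sum_congr rfl fun j _ => by ring
    refine ⟨Submodule.liftQ _ (Fintype.linearCombination R y) hker, ?_⟩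
    rw [← hy']
    have h8 := Submodule.liftQ_apply (LinearMap.range (Matrix.toLin' A))
      (Fintype.linearCombination R y) (h := hker) (Pi.single (Fin.last s) 1)
    refine h8.trans ?_
    rw [hyl]
    simp [Pi.single_apply]

end DetAux

open LinearMap

set_option synthInstance.maxHeartbeats 1000000
set_option maxHeartbeats 1000000

/-- In the determinantal setup over `R = k[x_0,…,x_{n+c}]`, with
`φ_c : F → G_c` given by a `t × (t+c−1)` homogeneous matrix (transposed matrix `A`),
`φ_{c−1}` obtained by deleting the last column, `B_i = coker φ_i`, dualizing the exact
sequence `0 → R(a) → B_c → B_{c−1} → 0` yields a short exact sequence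
`0 → Hom_R(B_{c−1}, R) → Hom_R(B_c, R) → I_{D_{c−1}}(−a) → 0` (twists suppressed), where
`I_{D_{c−1}}` is the determinantal ideal of maximal minors of the submatrix. -/
theorem stmt17 (k : Type) [Field k] (n c t s : ℕ) (hc : 2 ≤ c) (ht : 1 ≤ t)
    (hs : s = t + c - 2)
    (A : Matrix (Fin (s + 1)) (Fin t) (MvPolynomial (Fin (n + c + 1)) k))
    (hinj : Function.Injective (Matrix.toLin' A))
    -- the determinantal ideal of `A` has codimension `c`,
    (hcodimc : ringKrullDim ((MvPolynomial (Fin (n + c + 1)) k) ⧸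
        Ideal.span {d : MvPolynomial (Fin (n + c + 1)) k |
          ∃ g : Fin t → Fin (s + 1), Function.Injective g ∧
            d = (A.submatrix g _root_.id).det}) = (n + 1 : ℕ))
    -- and that of the submatrix with the last column deleted has codimension `c − 1`
    (hcodimcm1 : ringKrullDim ((MvPolynomial (Fin (n + c + 1)) k) ⧸
        Ideal.span {d : MvPolynomial (Fin (n + c + 1)) k |
          ∃ g : Fin t → Fin s, Function.Injective g ∧
            d = ((A.submatrix Fin.castSucc _root_.id).submatrix g _root_.id).det}) = (n + 2 : ℕ))
    -- `π : B_c → B_{c−1}` induced by deleting the last coordinate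
    (π : ((Fin (s + 1) → MvPolynomial (Fin (n + c + 1)) k) ⧸
        LinearMap.range (Matrix.toLin' A)) →ₗ[MvPolynomial (Fin (n + c + 1)) k]
      ((Fin s → MvPolynomial (Fin (n + c + 1)) k) ⧸
        LinearMap.range (Matrix.toLin' (A.submatrix Fin.castSucc _root_.id))))
    (hπ : π.comp (LinearMap.range (Matrix.toLin' A)).mkQ =
      (LinearMap.range (Matrix.toLin' (A.submatrix Fin.castSucc _root_.id))).mkQ.comp
        (LinearMap.funLeft (MvPolynomial (Fin (n + c + 1)) k)
          (MvPolynomial (Fin (n + c + 1)) k) Fin.castSucc)) :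
    ∃ g₂ : (((Fin (s + 1) → MvPolynomial (Fin (n + c + 1)) k) ⧸
          LinearMap.range (Matrix.toLin' A)) →ₗ[MvPolynomial (Fin (n + c + 1)) k]
          (MvPolynomial (Fin (n + c + 1)) k)) →ₗ[MvPolynomial (Fin (n + c + 1)) k]
        (Ideal.span {d : MvPolynomial (Fin (n + c + 1)) k |
          ∃ g : Fin t → Fin s, Function.Injective g ∧
            d = ((A.submatrix Fin.castSucc _root_.id).submatrix g _root_.id).det}),
      Function.Injective
        (LinearMap.lcomp (MvPolynomial (Fin (n + c + 1)) k)
          (MvPolynomial (Fin (n + c + 1)) k) π) ∧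
      Function.Exact
        (LinearMap.lcomp (MvPolynomial (Fin (n + c + 1)) k)
          (MvPolynomial (Fin (n + c + 1)) k) π) g₂ ∧
      Function.Surjective g₂ := by
  refine DetAux.final_gen A _ rfl ?_ π hπ
  intro y hy
  exact DetAux.syz_last_mem (c := c) (d := n + 1) A hcodimc.le (by omega) (by omega) (by omega) y hy
end
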